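/- arXiv:2202.07047 — 4 statements merged into one kernel-verified Lean document; each statement's English description precedes it below -/
import Mathlib

section
/- Fix c ∈ (0,1), P_t > 0 and an integer G ≥ 1. Let (g_{i,j})_{i,j≥1} be a doubly-indexed i.i.d. array of standard complex Gaussian random variables; for each L ≥ 1 set Q_L = ⌈cL⌉, α_L = L/P_t, let H_L be the Q_L×L matrix (g_{i,j})_{1≤i≤Q_L,1≤j≤L} with rows h_1,…,h_{Q_L}, and let H_{-k} denote H_L with its k-th row removed. Define A_L = h_k^T (α_L I_L + H_{-k}^H H_{-k})^{-1} h_k^*, B_L = h_k^T (α_L I_L + H_{-k}^H H_{-k})^{-1} H_{-k}^H H_{-k} (α_L I_L + H_{-k}^H H_{-k})^{-1} h_k^*, and ρ_L² = P_t / ((1/L)·Tr{ (1/L)H_L^H H_L · ((1/P_t)I_L + (1/L)H_L^H H_L)^{-2} }). Then, almost surely as L → ∞, the RZF SINR, SINR_L = (A_L²·ρ_L²/G) / ((1 + A_L)² + (ρ_L²/G)·B_L), converges to (a²·p²/G)/((1 + a)² + P_t/G), where a = (1/2)·[√((1−c)²P_t² + 2(1+c)P_t + 1) + (1−c)P_t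 − 1] and p² = P_t / ( a − (P_t/2)·( (P_t(c−1)² + c + 1)/√(P_t²(c−1)² + 2(c+1)P_t + 1) + 1 − c ) ). Consequently the normalized RZF average sum-rate R̄^{RZF}(G, cL)/(c·G·L) = ln(1 + SINR_L) converges almost surely to ln(1 + (a²·p²/G)/((1 + a)² + P_t/G)). -/
open MeasureTheory ProbabilityTheory Matrix
open scoped NNReal

/-- A family `g i` of complex random variables is i.i.d. standard complex Gaussian if the
real and imaginary parts of all its members form a jointly independent family of real
random variables, each distributed as `gaussianReal 0 (1/2)`. -/
def IsStdComplexGaussianFamily {Ω ι : Type*} [MeasurableSpace Ω] (P : Measure Ω)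
    (g : ι → Ω → ℂ) : Prop :=
  iIndepFun (m := fun _ : ι × Bool => (inferInstance : MeasurableSpace ℝ))
      (fun p ω => if p.2 then (g p.1 ω).re else (g p.1 ω).im) P ∧
  ∀ p : ι × Bool,
    Measure.map (fun ω => if p.2 then (g p.1 ω).re else (g p.1 ω).im) P
      = gaussianReal 0 (1 / 2 : ℝ≥0)

/-!
Write `R = (αI + W)⁻¹` for the resolvent of the Gram matrix `W = HᴴH` with `α = nz`, and compare it
with the resolvent of `W` minus the contribution `hᵢᴴhᵢ` of one row. A Gaussian fourth-moment bound
and Borel–Cantelli show that each quadratic form `hᵢ R₋ᵢ hᵢᴴ` concentrates around `tr R`, while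
Sherman–Morrison gives `tr (W R) = ∑ᵢ bᵢ / (1 + bᵢ)` with `bᵢ = hᵢ R₋ᵢ hᵢᴴ`. Hence any limit `f` of
`tr R` solves `1 - z f = c f / (1 + f)`, whose positive root is the Stieltjes transform of the
Marchenko–Pastur law.

The interference `hₖ R₋ₖ W₋ₖ R₋ₖ hₖᴴ` and the power `tr (R W R)` involve `R W R = R - α R²`, where
`-R²` is the derivative of `R` in `α`. As `hₖ R₋ₖ hₖᴴ` and `tr R` are convex in `z`, convergence of
these convex functions forces convergence of their derivatives, so both quantities tend to
`f + z f'`.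
-/

section

open Filter
open scoped ComplexOrder Topology ENNReal

section RowForm

variable {ι : Type*} [Fintype ι]

/-- The quadratic form `v M vᴴ` of a row vector `v`, as a real number: only the real part is
recorded, which loses nothing for Hermitian `M`. -/
def rowForm (M : Matrix ι ι ℂ) (v : ι → ℂ) : ℝ :=
  (v ⬝ᵥ M *ᵥ star v).re

lemma ofReal_rowForm {M : Matrix ι ι ℂ} (hM : M.IsHermitian) (v : ι → ℂ) :
    (rowForm M v : ℂ) = v ⬝ᵥ M *ᵥ star v := by
  refine Complex.ext rfl ?_
  simpa using (hM.im_star_dotProduct_mulVec_self (star v)).symm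

lemma rowForm_nonneg {M : Matrix ι ι ℂ} (hM : M.PosSemidef) (v : ι → ℂ) : 0 ≤ rowForm M v := by
  simpa [rowForm] using hM.re_dotProduct_nonneg (star v)

lemma rowForm_add (M N : Matrix ι ι ℂ) (v : ι → ℂ) :
    rowForm (M + N) v = rowForm M v + rowForm N v := by
  simp [rowForm, add_mulVec]

lemma rowForm_sub (M N : Matrix ι ι ℂ) (v : ι → ℂ) :
    rowForm (M - N) v = rowForm M v - rowForm N v := by
  simp [rowForm, sub_mulVec]

lemma rowForm_smul (a : ℝ) (M : Matrix ι ι ℂ) (v : ι → ℂ) :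
    rowForm ((a : ℂ) • M) v = a * rowForm M v := by
  simp [rowForm, smul_mulVec]

lemma rowForm_vecMulVec_mulVec {M : Matrix ι ι ℂ} (hM : M.IsHermitian) (v : ι → ℂ) :
    rowForm (vecMulVec (M *ᵥ star v) (v ᵥ* M)) v = rowForm M v ^ 2 := by
  rw [rowForm, vecMulVec_mulVec, ← dotProduct_mulVec, ← ofReal_rowForm hM]
  simp [← ofReal_rowForm hM, sq]

lemma re_trace_nonneg {M : Matrix ι ι ℂ} (hM : M.PosSemidef) : 0 ≤ M.trace.re :=
  (Complex.nonneg_iff.1 hM.trace_nonneg).1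

end RowForm

section Resolvent

lemma posDef_smul_one_add {ι : Type*} [DecidableEq ι] {α : ℝ} {W : Matrix ι ι ℂ} (hα : 0 < α)
    (hW : W.PosSemidef) : ((α : ℂ) • 1 + W).PosDef :=
  (PosDef.one.smul (Complex.zero_lt_real.2 hα)).add_posSemidef hW

variable {ι : Type*} [Fintype ι] [DecidableEq ι] {α β : ℝ} {W : Matrix ι ι ℂ}

/-- The regularized resolvent `(αI + W)⁻¹` of a complex matrix `W`. -/
noncomputable def ridgeResolvent (α : ℝ) (W : Matrix ι ι ℂ) : Matrix ι ι ℂ :=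
  ((α : ℂ) • 1 + W)⁻¹

lemma ridgeResolvent_posSemidef (hα : 0 < α) (hW : W.PosSemidef) :
    (ridgeResolvent α W).PosSemidef :=
  (posDef_smul_one_add hα hW).posSemidef.inv

lemma ridgeResolvent_conj_posSemidef (hα : 0 < α) (hW : W.PosSemidef) {M : Matrix ι ι ℂ}
    (hM : M.PosSemidef) : (ridgeResolvent α W * M * ridgeResolvent α W).PosSemidef := by
  have h := hM.mul_mul_conjTranspose_same (ridgeResolvent α W)
  rwa [(ridgeResolvent_posSemidef hα hW).1.eq] at h

lemma rowForm_ridgeResolvent_nonneg (hα : 0 < α) (hW : W.PosSemidef) (v : ι → ℂ) :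
    0 ≤ rowForm (ridgeResolvent α W) v :=
  rowForm_nonneg (ridgeResolvent_posSemidef hα hW) v

lemma re_trace_ridgeResolvent_nonneg (hα : 0 < α) (hW : W.PosSemidef) :
    0 ≤ (ridgeResolvent α W).trace.re :=
  re_trace_nonneg (ridgeResolvent_posSemidef hα hW)

lemma isUnit_det_smul_one_add (hα : 0 < α) (hW : W.PosSemidef) :
    IsUnit ((α : ℂ) • 1 + W).det :=
  (isUnit_iff_isUnit_det _).1 (posDef_smul_one_add hα hW).isUnit

lemma mul_ridgeResolvent (hα : 0 < α) (hW : W.PosSemidef) :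
    W * ridgeResolvent α W = 1 - (α : ℂ) • ridgeResolvent α W := by
  have h : ((α : ℂ) • 1 + W) * ridgeResolvent α W = 1 :=
    mul_nonsing_inv _ (isUnit_det_smul_one_add hα hW)
  rw [add_mul, smul_mul_assoc, one_mul] at h
  exact eq_sub_of_add_eq' h

lemma ridgeResolvent_mul_mul_ridgeResolvent (hα : 0 < α) (hW : W.PosSemidef) :
    ridgeResolvent α W * W * ridgeResolvent α W
      = ridgeResolvent α W - (α : ℂ) • ridgeResolvent α W ^ 2 := by
  rw [mul_assoc, mul_ridgeResolvent hα hW, mul_sub, mul_one, mul_smul_comm, sq]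

lemma rowForm_ridgeResolvent_sq_le (hα : 0 < α) (hW : W.PosSemidef) (v : ι → ℂ) :
    α * rowForm (ridgeResolvent α W ^ 2) v ≤ rowForm (ridgeResolvent α W) v := by
  have h := rowForm_nonneg (ridgeResolvent_conj_posSemidef hα hW hW) v
  rw [ridgeResolvent_mul_mul_ridgeResolvent hα hW, rowForm_sub, rowForm_smul] at h
  linarith

lemma re_trace_ridgeResolvent_sq_le (hα : 0 < α) (hW : W.PosSemidef) :
    α * (ridgeResolvent α W ^ 2).trace.re ≤ (ridgeResolvent α W).trace.re := by
  have h := re_trace_nonneg (ridgeResolvent_conj_posSemidef hα hW hW)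
  rw [ridgeResolvent_mul_mul_ridgeResolvent hα hW, trace_sub, trace_smul, Complex.sub_re,
    smul_eq_mul, Complex.re_ofReal_mul] at h
  linarith

lemma ridgeResolvent_sub_ridgeResolvent (hα : 0 < α) (hβ : 0 < β) (hW : W.PosSemidef) :
    ridgeResolvent α W - ridgeResolvent β W
      = ((β - α : ℝ) : ℂ) • (ridgeResolvent α W * ridgeResolvent β W) := by
  rw [ridgeResolvent, ridgeResolvent, Matrix.inv_sub_inv (iff_of_true
    (posDef_smul_one_add hα hW).isUnit (posDef_smul_one_add hβ hW).isUnit),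
    add_sub_add_right_eq_sub, ← sub_smul, ← Complex.ofReal_sub, mul_smul_comm, mul_one,
    smul_mul_assoc]

-- The gap between the resolvent and its tangent at `α` is `(β - α)² R_α R_β R_α`.
lemma posSemidef_ridgeResolvent_sub_tangent (hα : 0 < α) (hβ : 0 < β) (hW : W.PosSemidef) :
    (ridgeResolvent β W - ridgeResolvent α W
      + ((β - α : ℝ) : ℂ) • ridgeResolvent α W ^ 2).PosSemidef := by
  have hαβ := ridgeResolvent_sub_ridgeResolvent hα hβ hW
  have hβα : ridgeResolvent α W - ridgeResolvent β W
      = ((β - α : ℝ) : ℂ) • (ridgeResolvent β W * ridgeResolvent α W) := by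
    rw [← neg_sub, ridgeResolvent_sub_ridgeResolvent hβ hα hW, ← neg_smul, ← Complex.ofReal_neg,
      neg_sub]
  have hgap : ridgeResolvent β W - ridgeResolvent α W
      + ((β - α : ℝ) : ℂ) • ridgeResolvent α W ^ 2 = (((β - α) ^ 2 : ℝ) : ℂ) •
        (ridgeResolvent α W * ridgeResolvent β W * ridgeResolvent α W) := by
    calc _ = ((β - α : ℝ) : ℂ) • (ridgeResolvent α W *
          (ridgeResolvent α W - ridgeResolvent β W)) := by
          rw [mul_sub, ← sq, smul_sub, ← hαβ]
          abel
      _ = _ := by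
          rw [hβα, mul_smul_comm, smul_smul, ← Complex.ofReal_mul, ← sq, mul_assoc]
  rw [hgap]
  exact (ridgeResolvent_conj_posSemidef hα hW (ridgeResolvent_posSemidef hβ hW)).smul
    (Complex.zero_le_real.2 (sq_nonneg _))

lemma rowForm_ridgeResolvent_add_le (hα : 0 < α) (hβ : 0 < β) (hW : W.PosSemidef) (v : ι → ℂ) :
    rowForm (ridgeResolvent α W) v + (β - α) * -rowForm (ridgeResolvent α W ^ 2) v
      ≤ rowForm (ridgeResolvent β W) v := by
  have h := rowForm_nonneg (posSemidef_ridgeResolvent_sub_tangent hα hβ hW) v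
  rw [rowForm_add, rowForm_sub, rowForm_smul] at h
  linarith

lemma re_trace_ridgeResolvent_add_le (hα : 0 < α) (hβ : 0 < β) (hW : W.PosSemidef) :
    (ridgeResolvent α W).trace.re + (β - α) * -(ridgeResolvent α W ^ 2).trace.re
      ≤ (ridgeResolvent β W).trace.re := by
  have h := re_trace_nonneg (posSemidef_ridgeResolvent_sub_tangent hα hβ hW)
  rw [trace_add, trace_sub, trace_smul, Complex.add_re, Complex.sub_re, smul_eq_mul,
    Complex.re_ofReal_mul] at h
  linarith

end Resolvent

section RankOne

variable {ι : Type*} [Fintype ι] [DecidableEq ι] {α : ℝ} {W : Matrix ι ι ℂ}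

lemma inv_add_vecMulVec {𝕜 : Type*} [Field 𝕜] {K : Matrix ι ι 𝕜} (hK : IsUnit K.det)
    {w v : ι → 𝕜} (hb : 1 + v ⬝ᵥ K⁻¹ *ᵥ w ≠ 0) :
    (K + vecMulVec w v)⁻¹
      = K⁻¹ - (1 + v ⬝ᵥ K⁻¹ *ᵥ w)⁻¹ • vecMulVec (K⁻¹ *ᵥ w) (v ᵥ* K⁻¹) := by
  refine Matrix.inv_eq_right_inv ?_
  have hKv : K * vecMulVec (K⁻¹ *ᵥ w) (v ᵥ* K⁻¹) = vecMulVec w (v ᵥ* K⁻¹) := by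
    rw [mul_vecMulVec, mulVec_mulVec, mul_nonsing_inv _ hK, one_mulVec]
  rw [add_mul, mul_sub, mul_sub, mul_smul_comm, mul_smul_comm, hKv, mul_nonsing_inv _ hK,
    vecMulVec_mul_vecMulVec, vecMulVec_mul, vecMulVec_smul]
  match_scalars
  · ring
  · field_simp
    ring

lemma ridgeResolvent_add_vecMulVec (hα : 0 < α) (hW : W.PosSemidef) (v : ι → ℂ) :
    ridgeResolvent α (W + vecMulVec (star v) v) = ridgeResolvent α W
      - ((1 + rowForm (ridgeResolvent α W) v : ℝ) : ℂ)⁻¹ •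
        vecMulVec (ridgeResolvent α W *ᵥ star v) (v ᵥ* ridgeResolvent α W) := by
  have hb : (1 : ℂ) + v ⬝ᵥ ridgeResolvent α W *ᵥ star v
      = ((1 + rowForm (ridgeResolvent α W) v : ℝ) : ℂ) := by
    rw [← ofReal_rowForm (ridgeResolvent_posSemidef hα hW).1, Complex.ofReal_add,
      Complex.ofReal_one]
  have hne : 1 + rowForm (ridgeResolvent α W) v ≠ 0 := by
    have := rowForm_ridgeResolvent_nonneg hα hW v
    positivity
  rw [ridgeResolvent] at hb
  rw [ridgeResolvent, ← add_assoc, inv_add_vecMulVec (isUnit_det_smul_one_add hα hW)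
    (hb ▸ Complex.ofReal_ne_zero.2 hne), hb, ridgeResolvent]

lemma re_trace_vecMulVec_mulVec (M : Matrix ι ι ℂ) (v : ι → ℂ) :
    (vecMulVec (M *ᵥ star v) (v ᵥ* M)).trace.re = rowForm (M ^ 2) v := by
  rw [trace_vecMulVec, dotProduct_comm, ← dotProduct_mulVec, mulVec_mulVec, ← sq, rowForm]

lemma rowForm_ridgeResolvent_add_vecMulVec (hα : 0 < α) (hW : W.PosSemidef) (v : ι → ℂ) :
    rowForm (ridgeResolvent α (W + vecMulVec (star v) v)) v
      = rowForm (ridgeResolvent α W) v / (1 + rowForm (ridgeResolvent α W) v) := by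
  have := rowForm_ridgeResolvent_nonneg hα hW v
  rw [ridgeResolvent_add_vecMulVec hα hW, rowForm_sub, ← Complex.ofReal_inv, rowForm_smul,
    rowForm_vecMulVec_mulVec (ridgeResolvent_posSemidef hα hW).1]
  field_simp
  ring

lemma abs_re_trace_ridgeResolvent_add_vecMulVec_sub_le (hα : 0 < α) (hW : W.PosSemidef)
    (v : ι → ℂ) :
    |(ridgeResolvent α (W + vecMulVec (star v) v)).trace.re - (ridgeResolvent α W).trace.re|
      ≤ 1 / α := by
  have hb := rowForm_ridgeResolvent_nonneg hα hW v
  have hq : 0 ≤ rowForm (ridgeResolvent α W ^ 2) v :=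
    rowForm_nonneg ((ridgeResolvent_posSemidef hα hW).pow 2) v
  rw [ridgeResolvent_add_vecMulVec hα hW, trace_sub, trace_smul, smul_eq_mul, ← Complex.ofReal_inv,
    Complex.sub_re, Complex.re_ofReal_mul, re_trace_vecMulVec_mulVec, sub_sub_cancel_left, abs_neg,
    abs_of_nonneg (by positivity), inv_mul_le_iff₀ (by positivity), mul_one_div, le_div_iff₀ hα]
  linarith [rowForm_ridgeResolvent_sq_le hα hW v]

end RankOne

section Gram

variable {ι κ : Type*} {α : ℝ}

/-- The Gram matrix `∑ i ∈ s, (X i)ᴴ (X i)` of the rows `X i` with index in `s`, i.e. `Hᴴ H` for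
the matrix `H` with these rows. -/
def rowGram (X : κ → ι → ℂ) (s : Finset κ) : Matrix ι ι ℂ :=
  ∑ i ∈ s, vecMulVec (star (X i)) (X i)

lemma rowGram_erase_add [DecidableEq κ] (X : κ → ι → ℂ) {s : Finset κ} {i : κ} (hi : i ∈ s) :
    rowGram X (s.erase i) + vecMulVec (star (X i)) (X i) = rowGram X s :=
  Finset.sum_erase_add s _ hi

lemma rowGram_posSemidef [Finite ι] (X : κ → ι → ℂ) (s : Finset κ) : (rowGram X s).PosSemidef :=
  posSemidef_sum _ fun _ _ => posSemidef_vecMulVec_star_self _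

variable [Fintype ι]

lemma re_trace_rowGram_mul (X : κ → ι → ℂ) (s : Finset κ) (M : Matrix ι ι ℂ) :
    (rowGram X s * M).trace.re = ∑ i ∈ s, rowForm M (X i) := by
  rw [rowGram, Finset.sum_mul, trace_sum, Complex.re_sum]
  refine Finset.sum_congr rfl fun i _ => ?_
  rw [vecMulVec_mul, trace_vecMulVec, dotProduct_comm, ← dotProduct_mulVec, rowForm]

variable [DecidableEq ι]

lemma mul_re_trace_ridgeResolvent_rowGram [DecidableEq κ] (hα : 0 < α) (X : κ → ι → ℂ)
    (s : Finset κ) :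
    α * (ridgeResolvent α (rowGram X s)).trace.re = Fintype.card ι -
      ∑ i ∈ s, rowForm (ridgeResolvent α (rowGram X (s.erase i))) (X i) /
        (1 + rowForm (ridgeResolvent α (rowGram X (s.erase i))) (X i)) := by
  have h := re_trace_rowGram_mul X s (ridgeResolvent α (rowGram X s))
  rw [mul_ridgeResolvent hα (rowGram_posSemidef X s), trace_sub, trace_one, trace_smul, smul_eq_mul,
    Complex.sub_re, Complex.re_ofReal_mul, Complex.natCast_re, Finset.sum_congr rfl fun i hi => by
      rw [← rowGram_erase_add X hi,
        rowForm_ridgeResolvent_add_vecMulVec hα (rowGram_posSemidef X _)]] at h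
  linarith

lemma re_trace_ridgeResolvent_sq_rowGram_le (hα : 0 < α) (X : κ → ι → ℂ) (s : Finset κ) :
    (ridgeResolvent α (rowGram X s) ^ 2).trace.re ≤ Fintype.card ι / α ^ 2 := by
  classical
  have hsum : 0 ≤ ∑ i ∈ s, rowForm (ridgeResolvent α (rowGram X (s.erase i))) (X i) /
      (1 + rowForm (ridgeResolvent α (rowGram X (s.erase i))) (X i)) :=
    Finset.sum_nonneg fun i _ => by
      have := rowForm_ridgeResolvent_nonneg hα (rowGram_posSemidef X (s.erase i)) (X i)
      positivity
  rw [le_div_iff₀ (by positivity)]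
  nlinarith [re_trace_ridgeResolvent_sq_le hα (rowGram_posSemidef X s),
    mul_re_trace_ridgeResolvent_rowGram hα X s]

lemma abs_re_trace_ridgeResolvent_rowGram_erase_sub_le [DecidableEq κ] (hα : 0 < α)
    (X : κ → ι → ℂ) (s : Finset κ) (i : κ) :
    |(ridgeResolvent α (rowGram X (s.erase i))).trace.re
      - (ridgeResolvent α (rowGram X s)).trace.re| ≤ 1 / α := by
  by_cases hi : i ∈ s
  · rw [abs_sub_comm, ← rowGram_erase_add X hi]
    exact abs_re_trace_ridgeResolvent_add_vecMulVec_sub_le hα (rowGram_posSemidef X _) (X i)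
  · rw [Finset.erase_eq_of_notMem hi, sub_self, abs_zero]
    positivity

end Gram

section GaussianQuadraticForm

lemma exp_neg_half_div_sqrt_one_sub_le {u : ℝ} (hu : |u| ≤ 1 / 2) :
    Real.exp (-u / 2) / √(1 - u) ≤ Real.exp (u ^ 2) := by
  obtain ⟨-, hu⟩ := abs_le.1 hu
  have hpos : 0 < 1 - u := by linarith
  have hlog : -u - 2 * u ^ 2 ≤ Real.log (1 - u) := by
    refine le_trans ?_ (Real.one_sub_inv_le_log_of_pos hpos)
    rw [le_sub_iff_add_le, ← le_sub_iff_add_le', inv_le_iff_one_le_mul₀ hpos]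
    nlinarith [mul_nonneg (sq_nonneg u) (by linarith : (0 : ℝ) ≤ 1 - 2 * u)]
  rw [div_le_iff₀ (by positivity), Real.sqrt_eq_rpow, Real.rpow_def_of_pos hpos, ← Real.exp_add,
    Real.exp_le_exp]
  linarith

lemma lintegral_exp_mul_sq_sub_one_gaussianReal_le {u : ℝ} (hu : |u| ≤ 1 / 4) :
    ∫⁻ x, ENNReal.ofReal (Real.exp (u * (x ^ 2 - 1))) ∂gaussianReal 0 1
      ≤ ENNReal.ofReal (Real.exp (4 * u ^ 2)) := by
  have hu' : |2 * u| ≤ 1 / 2 := by rw [abs_mul, abs_two]; linarith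
  have hb : 0 < 1 / 2 - u := by linarith [(abs_le.1 hu).2]
  have hdensity (x : ℝ) : (gaussianPDF 0 1 * fun x =>
      ENNReal.ofReal (Real.exp (u * (x ^ 2 - 1)))) x = ENNReal.ofReal
        ((√(2 * Real.pi))⁻¹ * Real.exp (-u) * Real.exp (-(1 / 2 - u) * x ^ 2)) := by
    simp only [Pi.mul_apply, gaussianPDF, gaussianPDFReal, NNReal.coe_one, mul_one, sub_zero]
    rw [← ENNReal.ofReal_mul (by positivity), mul_assoc, mul_assoc, ← Real.exp_add,
      ← Real.exp_add]
    ring_nf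
  have hsqrt : √(Real.pi / (1 / 2 - u)) = √(2 * Real.pi) / √(1 - 2 * u) := by
    rw [← Real.sqrt_div (by positivity)]
    congr 1
    field_simp
  rw [gaussianReal_of_var_ne_zero _ one_ne_zero,
    lintegral_withDensity_eq_lintegral_mul _ (measurable_gaussianPDF _ _) (by fun_prop),
    lintegral_congr hdensity, ← ofReal_integral_eq_lintegral_ofReal
      ((integrable_exp_neg_mul_sq hb).const_mul _) (.of_forall fun x => by positivity),
    integral_const_mul, integral_gaussian, hsqrt]
  refine ENNReal.ofReal_le_ofReal ?_
  calc (√(2 * Real.pi))⁻¹ * Real.exp (-u) * (√(2 * Real.pi) / √(1 - 2 * u))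
      = Real.exp (-(2 * u) / 2) / √(1 - 2 * u) := by field_simp
    _ ≤ Real.exp ((2 * u) ^ 2) := exp_neg_half_div_sqrt_one_sub_le hu'
    _ = Real.exp (4 * u ^ 2) := by ring_nf

lemma pow_four_le_exp_add_exp_neg (y : ℝ) : y ^ 4 ≤ 24 * (Real.exp y + Real.exp (-y)) := by
  have h := Real.pow_div_factorial_le_exp |y| (abs_nonneg y) 4
  rw [(by decide : Even 4).pow_abs, div_le_iff₀ (by positivity)] at h
  calc y ^ 4 ≤ Real.exp |y| * (Nat.factorial 4) := h
    _ = 24 * Real.exp |y| := by norm_num [Nat.factorial, mul_comm]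
    _ ≤ _ := by gcongr; exact Real.exp_abs_le y

variable {η : Type*} [Fintype η]

lemma lintegral_exp_sum_mul_sq_sub_one_pi_gaussianReal_le {u : η → ℝ} (hu : ∀ p, |u p| ≤ 1 / 4) :
    ∫⁻ x, ENNReal.ofReal (Real.exp (∑ p, u p * (x p ^ 2 - 1)))
        ∂Measure.pi (fun _ : η => gaussianReal 0 1)
      ≤ ENNReal.ofReal (Real.exp (4 * ∑ p, u p ^ 2)) := by
  have hmeas (p : η) : Measurable fun y : ℝ => ENNReal.ofReal (Real.exp (u p * (y ^ 2 - 1))) := by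
    fun_prop
  simp_rw [Finset.mul_sum, Real.exp_sum, ENNReal.ofReal_prod_of_nonneg fun _ _ => Real.exp_nonneg _]
  rw [lintegral_prod_eq_prod_lintegral_of_indepFun Finset.univ _
    (iIndepFun_pi fun p => (hmeas p).aemeasurable) fun p => (hmeas p).comp (measurable_pi_apply p)]
  refine Finset.prod_le_prod' fun p _ => ?_
  rw [(measurePreserving_eval (fun _ : η => gaussianReal 0 1) p).lintegral_comp (hmeas p)]
  exact lintegral_exp_mul_sq_sub_one_gaussianReal_le (hu p)

lemma lintegral_exp_sum_mul_sq_sub_one_pi_gaussianReal_le_two {u : η → ℝ}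
    (hu : 16 * ∑ p, u p ^ 2 ≤ 1) :
    ∫⁻ x, ENNReal.ofReal (Real.exp (∑ p, u p * (x p ^ 2 - 1)))
      ∂Measure.pi (fun _ : η => gaussianReal 0 1) ≤ ENNReal.ofReal 2 := by
  have hu_le (p : η) : |u p| ≤ 1 / 4 := by
    have := Finset.single_le_sum (fun q _ => sq_nonneg (u q)) (Finset.mem_univ p)
    exact abs_le_of_sq_le_sq (by linarith) (by norm_num)
  refine (lintegral_exp_sum_mul_sq_sub_one_pi_gaussianReal_le hu_le).trans
    (ENNReal.ofReal_le_ofReal ?_)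
  calc Real.exp (4 * ∑ p, u p ^ 2) ≤ Real.exp (Real.log 2) :=
        Real.exp_le_exp.2 (by linarith [Real.log_two_gt_d9])
    _ = 2 := Real.exp_log two_pos

lemma lintegral_sum_mul_sq_sub_one_pow_four_pi_gaussianReal_le {d : η → ℝ} {S : ℝ} (hS : 0 < S)
    (hd : ∑ p, d p ^ 2 ≤ S) :
    ∫⁻ x, ENNReal.ofReal ((∑ p, d p * (x p ^ 2 - 1)) ^ 4)
        ∂Measure.pi (fun _ : η => gaussianReal 0 1) ≤ ENNReal.ofReal (24576 * S ^ 2) := by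
  obtain ⟨t, ht⟩ : ∃ t : ℝ, 16 * S * t ^ 2 = 1 :=
    ⟨√(16 * S)⁻¹, by rw [Real.sq_sqrt (by positivity)]; field_simp⟩
  have hexp (ε : ℝ) (hε : ε ^ 2 = 1) :
      ∫⁻ x, ENNReal.ofReal (Real.exp (ε * t * ∑ p, d p * (x p ^ 2 - 1)))
        ∂Measure.pi (fun _ : η => gaussianReal 0 1) ≤ ENNReal.ofReal 2 := by
    simp_rw [Finset.mul_sum, ← mul_assoc]
    refine lintegral_exp_sum_mul_sq_sub_one_pi_gaussianReal_le_two ?_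
    simp_rw [mul_pow, hε, one_mul, ← Finset.mul_sum]
    nlinarith [mul_le_mul_of_nonneg_left hd (sq_nonneg t)]
  have hpow (y : ℝ) : ENNReal.ofReal (y ^ 4) ≤ ENNReal.ofReal (6144 * S ^ 2) *
      (ENNReal.ofReal (Real.exp (1 * t * y)) + ENNReal.ofReal (Real.exp (-1 * t * y))) := by
    rw [← ENNReal.ofReal_add (by positivity) (by positivity), ← ENNReal.ofReal_mul (by positivity),
      one_mul, neg_one_mul, neg_mul]
    refine ENNReal.ofReal_le_ofReal ?_
    calc y ^ 4 = (16 * S * t ^ 2) ^ 2 * y ^ 4 := by rw [ht, one_pow, one_mul]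
      _ = 256 * S ^ 2 * (t * y) ^ 4 := by ring
      _ ≤ 256 * S ^ 2 * (24 * _) := by gcongr; exact pow_four_le_exp_add_exp_neg _
      _ = _ := by ring
  calc _ ≤ _ := lintegral_mono fun x => hpow _
    _ ≤ ENNReal.ofReal (6144 * S ^ 2) * (ENNReal.ofReal 2 + ENNReal.ofReal 2) := by
        rw [lintegral_const_mul _ (by fun_prop), lintegral_add_left (by fun_prop)]
        gcongr
        · exact hexp 1 (by norm_num)
        · exact hexp (-1) (by norm_num)
    _ = _ := by
        rw [← ENNReal.ofReal_add (by positivity) (by positivity),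
          ← ENNReal.ofReal_mul (by positivity)]
        ring_nf

variable {E : Type*} [NormedAddCommGroup E] [InnerProductSpace ℝ E] [FiniteDimensional ℝ E]
  [MeasurableSpace E] [BorelSpace E]

lemma lintegral_inner_sub_trace_pow_four_stdGaussian_le {T : E →ₗ[ℝ] E} (hT : T.IsSymmetric)
    {S : ℝ} (hS : 0 < S) (hTS : LinearMap.trace ℝ E (T ^ 2) ≤ S) :
    ∫⁻ x, ENNReal.ofReal ((inner ℝ (T x) x - LinearMap.trace ℝ E T) ^ 4) ∂stdGaussian E
      ≤ ENNReal.ofReal (24576 * S ^ 2) := by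
  set b := hT.eigenvectorBasis rfl
  set d := hT.eigenvalues rfl
  have hTb (p) : T (b p) = d p • b p := hT.apply_eigenvectorBasis rfl p
  have htr : LinearMap.trace ℝ E T = ∑ p, d p := hT.trace_eq_sum_eigenvalues rfl
  have htr_sq : LinearMap.trace ℝ E (T ^ 2) = ∑ p, d p ^ 2 := by
    rw [LinearMap.trace_eq_sum_inner _ b]
    simp [sq, hTb, real_inner_smul_right]
  have hquad (x : _ → ℝ) : inner ℝ (T (∑ p, x p • b p)) (∑ p, x p • b p) - LinearMap.trace ℝ E T
      = ∑ p, d p * (x p ^ 2 - 1) := by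
    have hTx : T (∑ p, x p • b p) = ∑ p, (x p * d p) • b p := by simp [hTb, mul_smul]
    rw [hTx, b.orthonormal.inner_sum, htr, ← Finset.sum_sub_distrib]
    exact Finset.sum_congr rfl fun p _ => by simp; ring
  have hcont : Continuous T := T.continuous_of_finiteDimensional
  rw [stdGaussian_eq_map_pi_orthonormalBasis b, lintegral_map (by fun_prop) (by fun_prop)]
  simp_rw [hquad]
  exact lintegral_sum_mul_sq_sub_one_pow_four_pi_gaussianReal_le hS (htr_sq ▸ hTS)

end GaussianQuadraticForm

section StdComplexGaussian

variable {ι : Type*} [Fintype ι]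

lemma inner_euclideanSpace_eq_re_dotProduct (x y : EuclideanSpace ℂ ι) :
    inner ℝ x y = (x.ofLp ⬝ᵥ star y.ofLp).re := by
  rw [PiLp.inner_apply, dotProduct, Complex.re_sum]
  refine Finset.sum_congr rfl fun i _ => ?_
  rw [Complex.inner, ← Complex.conj_re, map_mul, Complex.conj_conj, mul_comm]
  rfl

/-- The orthonormal basis `e i`, `I • e i` of `ℂ^ι` viewed as a real Euclidean space; the vector
`e i` has index `(i, true)` and `I • e i` has index `(i, false)`. -/
noncomputable def realImBasis (ι : Type*) [Fintype ι] :
    OrthonormalBasis (ι × Bool) ℝ (EuclideanSpace ℂ ι) :=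
  (Pi.orthonormalBasis fun _ : ι => Complex.orthonormalBasisOneI.reindex
    (finTwoEquiv.trans Equiv.boolNot)).reindex (Equiv.sigmaEquivProd ι Bool)

lemma realImBasis_apply [DecidableEq ι] (i : ι) (b : Bool) :
    realImBasis ι (i, b) = EuclideanSpace.single i (if b then 1 else Complex.I) := by
  have h : Complex.orthonormalBasisOneI (finTwoEquiv.symm !b) = if b then 1 else Complex.I := by
    cases b <;> simp <;> rfl
  ext j
  simp [realImBasis, ← h]

lemma sum_smul_realImBasis_apply (x : ι × Bool → ℝ) (i : ι) :
    (∑ p, x p • realImBasis ι p) i = x (i, true) + x (i, false) * Complex.I := by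
  classical
  simp [Fintype.sum_prod_type, realImBasis_apply, Finset.sum_add_distrib, Pi.single_apply]

/-- The law of a vector of i.i.d. standard complex Gaussian entries. The scaling accounts for the
real and imaginary parts having variance `1 / 2`. -/
noncomputable def stdComplexGaussian (ι : Type*) [Fintype ι] : Measure (ι → ℂ) :=
  (stdGaussian (EuclideanSpace ℂ ι)).map fun x => (√2)⁻¹ • x.ofLp

lemma rowForm_real_smul_right (a : ℝ) (M : Matrix ι ι ℂ) (v : ι → ℂ) :
    rowForm M (a • v) = a ^ 2 * rowForm M v := by
  simp only [rowForm, star_smul, star_trivial, mulVec_smul, dotProduct_smul, smul_dotProduct,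
    Complex.smul_re, smul_eq_mul]
  ring

lemma gaussianReal_half_eq_map :
    gaussianReal 0 (1 / 2) = (gaussianReal 0 1).map fun x => (√2)⁻¹ * x := by
  rw [gaussianReal_map_const_mul, mul_zero]
  congr 1
  ext
  simp

lemma map_eq_stdComplexGaussian {Ω : Type*} [MeasurableSpace Ω] {P : Measure Ω}
    {g : ι → Ω → ℂ} (hmeas : ∀ i, Measurable (g i)) (hg : IsStdComplexGaussianFamily P g) :
    P.map (fun ω i => g i ω) = stdComplexGaussian ι := by
  have := hg.1.isProbabilityMeasure
  set y : ι × Bool → Ω → ℝ := fun p ω => if p.2 then (g p.1 ω).re else (g p.1 ω).im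
  have hy (p) : Measurable (y p) := by
    obtain ⟨i, _ | _⟩ := p
    exacts [Complex.measurable_im.comp (hmeas i), Complex.measurable_re.comp (hmeas i)]
  have hlaw : P.map (fun ω p => y p ω) =
      (Measure.pi fun _ => gaussianReal 0 1).map fun x p => (√2)⁻¹ * x p := by
    rw [(iIndepFun_iff_map_fun_eq_pi_map fun p => (hy p).aemeasurable).1 hg.1,
      Measure.pi_map_pi fun _ => by fun_prop]
    simp_rw [← gaussianReal_half_eq_map]
    exact congrArg Measure.pi (funext hg.2)
  have hcomplex : Measurable fun (x : ι × Bool → ℝ) i =>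
      (x (i, true) + x (i, false) * Complex.I : ℂ) := by
    fun_prop
  calc P.map (fun ω i => g i ω)
      = (P.map fun ω p => y p ω).map fun x i => (x (i, true) + x (i, false) * Complex.I : ℂ) := by
        rw [Measure.map_map hcomplex (by fun_prop)]
        congr with ω i
        simp [y]
    _ = stdComplexGaussian ι := by
        rw [hlaw, Measure.map_map hcomplex (by fun_prop), stdComplexGaussian,
          stdGaussian_eq_map_pi_orthonormalBasis (realImBasis ι),
          Measure.map_map (by fun_prop) (by fun_prop)]
        refine congrArg (Measure.map · _) (funext fun x => funext fun i => ?_)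
        rw [Function.comp_apply, Function.comp_apply, Pi.smul_apply, sum_smul_realImBasis_apply,
          Complex.real_smul]
        push_cast
        ring

variable [DecidableEq ι]

lemma trace_restrictScalars_toEuclideanLin (N : Matrix ι ι ℂ) :
    LinearMap.trace ℝ (EuclideanSpace ℂ ι) ((toEuclideanLin N).restrictScalars ℝ)
      = 2 * N.trace.re := by
  rw [LinearMap.trace_eq_sum_inner _ (realImBasis ι), Fintype.sum_prod_type]
  simp [realImBasis_apply, Matrix.trace, inner_euclideanSpace_eq_re_dotProduct,
    Finset.sum_add_distrib, two_mul]

lemma restrictScalars_toEuclideanLin_sq (N : Matrix ι ι ℂ) :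
    (toEuclideanLin N).restrictScalars ℝ ^ 2 = (toEuclideanLin (N ^ 2)).restrictScalars ℝ := by
  ext x
  simp [sq]

lemma inner_toEuclideanLin_transpose_self (M : Matrix ι ι ℂ) (x : EuclideanSpace ℂ ι) :
    inner ℝ (toEuclideanLin Mᵀ x) x = rowForm M x := by
  rw [inner_euclideanSpace_eq_re_dotProduct, rowForm, dotProduct_mulVec, ← mulVec_transpose]
  rfl

lemma isSymmetric_restrictScalars_toEuclideanLin {M : Matrix ι ι ℂ} (hM : M.IsHermitian) :
    ((toEuclideanLin M).restrictScalars ℝ).IsSymmetric := by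
  intro x y
  have h := congrArg Complex.re (isSymmetric_toEuclideanLin_iff.2 hM y x)
  rw [EuclideanSpace.inner_eq_star_dotProduct, EuclideanSpace.inner_eq_star_dotProduct] at h
  rw [inner_euclideanSpace_eq_re_dotProduct, inner_euclideanSpace_eq_re_dotProduct]
  exact h.symm

lemma lintegral_rowForm_sub_re_trace_pow_four_stdComplexGaussian_le {M : Matrix ι ι ℂ}
    (hM : M.IsHermitian) {S : ℝ} (hS : 0 < S) (hMS : (M ^ 2).trace.re ≤ S) :
    ∫⁻ v, ENNReal.ofReal ((rowForm M v - M.trace.re) ^ 4) ∂stdComplexGaussian ι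
      ≤ ENNReal.ofReal (6144 * S ^ 2) := by
  set T := (toEuclideanLin Mᵀ).restrictScalars ℝ
  have hT : T.IsSymmetric := isSymmetric_restrictScalars_toEuclideanLin hM.transpose
  have htr : LinearMap.trace ℝ (EuclideanSpace ℂ ι) T = 2 * M.trace.re := by
    rw [trace_restrictScalars_toEuclideanLin, trace_transpose]
  have htr_sq : LinearMap.trace ℝ (EuclideanSpace ℂ ι) (T ^ 2) ≤ 2 * S := by
    rw [restrictScalars_toEuclideanLin_sq, trace_restrictScalars_toEuclideanLin, ← transpose_pow,
      trace_transpose]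
    linarith
  have hscale (x : EuclideanSpace ℂ ι) :
      ENNReal.ofReal ((rowForm M ((√2)⁻¹ • x.ofLp) - M.trace.re) ^ 4) = ENNReal.ofReal (1 / 16) *
        ENNReal.ofReal ((inner ℝ (T x) x - LinearMap.trace ℝ (EuclideanSpace ℂ ι) T) ^ 4) := by
    rw [← ENNReal.ofReal_mul (by norm_num), rowForm_real_smul_right, htr,
      LinearMap.restrictScalars_apply, inner_toEuclideanLin_transpose_self, inv_pow,
      Real.sq_sqrt zero_le_two]
    ring_nf
  have : Continuous T := T.continuous_of_finiteDimensional
  rw [stdComplexGaussian, lintegral_map (by unfold rowForm; fun_prop) (by fun_prop)]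
  simp_rw [hscale]
  rw [lintegral_const_mul _ (by fun_prop)]
  calc _ ≤ ENNReal.ofReal (1 / 16) * ENNReal.ofReal (24576 * (2 * S) ^ 2) := by
        gcongr
        exact lintegral_inner_sub_trace_pow_four_stdGaussian_le hT (by positivity) htr_sq
    _ = _ := by
        rw [← ENNReal.ofReal_mul (by norm_num)]
        ring_nf

end StdComplexGaussian

section IndependentRows

variable {Ω : Type*} [MeasurableSpace Ω] {P : Measure Ω}

lemma lintegral_comp_prodMk_le_of_indepFun [IsProbabilityMeasure P] {β γ : Type*}
    [MeasurableSpace β] [MeasurableSpace γ] {x : Ω → β} {y : Ω → γ}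
    (hx : Measurable x) (hy : Measurable y) (hxy : IndepFun x y P)
    {F : β × γ → ℝ≥0∞} (hF : Measurable F) {C : ℝ≥0∞}
    (hC : ∀ c, ∫⁻ b, F (b, c) ∂P.map x ≤ C) : ∫⁻ ω, F (x ω, y ω) ∂P ≤ C := by
  have := Measure.isProbabilityMeasure_map (μ := P) hy.aemeasurable
  rw [← lintegral_map hF (hx.prodMk hy), (indepFun_iff_map_prod_eq_prod_map_map hx.aemeasurable
    hy.aemeasurable).1 hxy, lintegral_prod_symm _ hF.aemeasurable]
  exact (lintegral_mono hC).trans (by simp)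

lemma IsStdComplexGaussianFamily.precomp {η ξ : Type*} {g : η → Ω → ℂ}
    (hg : IsStdComplexGaussianFamily P g) {e : ξ → η} (he : e.Injective) :
    IsStdComplexGaussianFamily P (g ∘ e) :=
  ⟨hg.1.precomp (he.prodMap Function.injective_id), fun p => hg.2 (e p.1, p.2)⟩

lemma IsStdComplexGaussianFamily.indepFun_row {ι κ : Type*} [Finite ι] {X : κ → ι → Ω → ℂ}
    (hX : IsStdComplexGaussianFamily P fun p : κ × ι => X p.1 p.2)
    (hmeas : ∀ i j, Measurable (X i j)) {s : Finset κ} {i : κ} (hi : i ∉ s) :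
    IndepFun (fun ω j => X i j ω) (fun ω (i' : s) j => X i' j ω) P := by
  classical
  have := Fintype.ofFinite ι
  have hcoord (p : (κ × ι) × Bool) :
      Measurable fun ω => if p.2 then (X p.1.1 p.1.2 ω).re else (X p.1.1 p.1.2 ω).im := by
    obtain ⟨p, _ | _⟩ := p
    exacts [Complex.measurable_im.comp (hmeas _ _), Complex.measurable_re.comp (hmeas _ _)]
  let coords (t : Finset κ) : Finset ((κ × ι) × Bool) := (t ×ˢ Finset.univ) ×ˢ Finset.univ
  have hdisj : Disjoint (coords {i}) (coords s) :=
    Finset.disjoint_product.2 (.inl (Finset.disjoint_product.2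
      (.inl (Finset.disjoint_singleton_left.2 hi))))
  let assemble (t : Finset κ) (y : coords t → ℝ) (i' : t) (j : ι) : ℂ :=
    y ⟨((i', j), true), by simp [coords]⟩ + y ⟨((i', j), false), by simp [coords]⟩ * Complex.I
  have hassemble (t) : Measurable (assemble t) := by fun_prop
  have h := (hX.1.indepFun_finset _ _ hdisj hcoord).comp
    ((measurable_pi_apply ⟨i, by simp⟩).comp (hassemble {i})) (hassemble s)
  simpa [Function.comp_def, assemble] using h

end IndependentRows

section RowConcentration

/-- The deviation of the quadratic form `v (αI + W)⁻¹ vᴴ` from its mean `tr (αI + W)⁻¹` under a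
standard complex Gaussian row `v`. -/
noncomputable def ridgeFluctuation {ι : Type*} [Fintype ι] [DecidableEq ι] (α : ℝ)
    (W : Matrix ι ι ℂ) (v : ι → ℂ) : ℝ :=
  rowForm (ridgeResolvent α W) v - (ridgeResolvent α W).trace.re

lemma rowGram_coe_univ {ι κ : Type*} (X : κ → ι → ℂ) (s : Finset κ) :
    rowGram (fun i : s => X i) Finset.univ = rowGram X s :=
  Finset.sum_coe_sort s fun i => vecMulVec (star (X i)) (X i)

variable {ι κ : Type*} [Fintype ι] [DecidableEq ι] {α : ℝ}

lemma continuous_ridgeResolvent_rowGram (hα : 0 < α) (s : Finset κ) :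
    Continuous fun X : κ → ι → ℂ => ridgeResolvent α (rowGram X s) := by
  have hK : Continuous fun X : κ → ι → ℂ => (α : ℂ) • (1 : Matrix ι ι ℂ) + rowGram X s := by
    unfold rowGram
    fun_prop
  simp only [ridgeResolvent, Matrix.inv_def, Ring.inverse_eq_inv']
  exact (hK.matrix_det.inv₀ fun X =>
    (isUnit_det_smul_one_add hα (rowGram_posSemidef X s)).ne_zero).smul hK.matrix_adjugate

lemma continuous_ridgeFluctuation_rowGram (hα : 0 < α) (s : Finset κ) :
    Continuous fun p : (ι → ℂ) × (κ → ι → ℂ) => ridgeFluctuation α (rowGram p.2 s) p.1 := by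
  have hR := (continuous_ridgeResolvent_rowGram (ι := ι) hα s).comp
    (continuous_snd (X := ι → ℂ))
  unfold ridgeFluctuation rowForm
  exact (Complex.continuous_re.comp
    (continuous_fst.dotProduct (hR.matrix_mulVec continuous_fst.star))).sub
    (Complex.continuous_re.comp hR.matrix_trace)

lemma lintegral_ridgeFluctuation_pow_four_stdComplexGaussian_le [Nonempty ι] (hα : 0 < α)
    (X : κ → ι → ℂ) (s : Finset κ) :
    ∫⁻ v, ENNReal.ofReal (ridgeFluctuation α (rowGram X s) v ^ 4) ∂stdComplexGaussian ι
      ≤ ENNReal.ofReal (6144 * (Fintype.card ι / α ^ 2) ^ 2) :=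
  lintegral_rowForm_sub_re_trace_pow_four_stdComplexGaussian_le
    (ridgeResolvent_posSemidef hα (rowGram_posSemidef X s)).1 (by positivity)
    (re_trace_ridgeResolvent_sq_rowGram_le hα X s)

variable {Ω : Type*} [MeasurableSpace Ω] {X : κ → ι → Ω → ℂ}

lemma measurable_ridgeFluctuation_row (hmeas : ∀ i j, Measurable (X i j)) (hα : 0 < α)
    (s : Finset κ) (i : κ) : Measurable fun ω =>
      ridgeFluctuation α (rowGram (fun i j => X i j ω) s) (fun j => X i j ω) := by
  simp_rw [← rowGram_coe_univ _ s]
  have h := (continuous_ridgeFluctuation_rowGram (ι := ι) (κ := s) hα Finset.univ).measurable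
  exact h.comp (g := fun p : (ι → ℂ) × (s → ι → ℂ) =>
      ridgeFluctuation α (rowGram p.2 Finset.univ) p.1)
    (f := fun ω => (fun j => X i j ω, fun (i' : s) j => X i' j ω)) (by fun_prop)

lemma lintegral_ridgeFluctuation_row_pow_four_le {P : Measure Ω} [Nonempty ι]
    (hX : IsStdComplexGaussianFamily P fun p : κ × ι => X p.1 p.2)
    (hmeas : ∀ i j, Measurable (X i j)) (hα : 0 < α) {s : Finset κ} {i : κ} (hi : i ∉ s) :
    ∫⁻ ω, ENNReal.ofReal
        (ridgeFluctuation α (rowGram (fun i j => X i j ω) s) (fun j => X i j ω) ^ 4) ∂P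
      ≤ ENNReal.ofReal (6144 * (Fintype.card ι / α ^ 2) ^ 2) := by
  have := hX.1.isProbabilityMeasure
  have hrow : P.map (fun ω j => X i j ω) = stdComplexGaussian ι :=
    map_eq_stdComplexGaussian (hmeas i) (hX.precomp (Prod.mk_right_injective i))
  simp_rw [← rowGram_coe_univ _ s]
  refine lintegral_comp_prodMk_le_of_indepFun (x := fun ω j => X i j ω)
    (y := fun ω (i' : s) j => X i' j ω) (by fun_prop) (by fun_prop) (hX.indepFun_row hmeas hi)
    (F := fun p => ENNReal.ofReal (ridgeFluctuation α (rowGram p.2 Finset.univ) p.1 ^ 4))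
    ((continuous_ridgeFluctuation_rowGram hα Finset.univ).measurable.pow_const 4).ennreal_ofReal
    fun Y => ?_
  rw [hrow]
  exact lintegral_ridgeFluctuation_pow_four_stdComplexGaussian_le hα Y Finset.univ

end RowConcentration

section BorelCantelli

variable {Ω : Type*} [MeasurableSpace Ω] {P : Measure Ω}

lemma ae_frequently_of_frequently_ae {β : Type*} {l : Filter β} [l.IsCountablyGenerated]
    {p : β → Ω → Prop} (h : ∃ᶠ y in l, ∀ᵐ ω ∂P, p y ω) : ∀ᵐ ω ∂P, ∃ᶠ y in l, p y ω := by
  obtain ⟨u, hu, hp⟩ := Filter.exists_seq_forall_of_frequently h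
  filter_upwards [ae_all_iff.2 hp] with ω hω
  exact hu.frequently (Frequently.of_forall hω)

lemma ae_tendsto_zero_of_tsum_lintegral_ne_top {F : ℕ → Ω → ℝ≥0∞} (hF : ∀ n, AEMeasurable (F n) P)
    (h : ∑' n, ∫⁻ ω, F n ω ∂P ≠ ∞) : ∀ᵐ ω ∂P, Tendsto (F · ω) atTop (𝓝 0) := by
  rw [← lintegral_tsum hF] at h
  filter_upwards [ae_lt_top' (AEMeasurable.tsum hF) h] with ω hω
  exact ENNReal.tendsto_atTop_zero_of_tsum_ne_top hω.ne

lemma ae_tendsto_zero_of_lintegral_pow_four_le {F : ℕ → Ω → ℝ} (hF : ∀ n ≠ 0, Measurable (F n))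
    {C : ℝ} (h : ∀ n ≠ 0, ∫⁻ ω, ENNReal.ofReal (F n ω ^ 4) ∂P ≤ ENNReal.ofReal (C / n ^ 2)) :
    ∀ᵐ ω ∂P, Tendsto (F · ω) atTop (𝓝 0) := by
  have hsum : ∑' n, ∫⁻ ω, ENNReal.ofReal (F (n + 1) ω ^ 4) ∂P ≠ ∞ := by
    have hC : Summable fun n : ℕ => C / ((n + 1 : ℕ) : ℝ) ^ 2 := by
      simpa [div_eq_mul_inv] using
        ((summable_nat_add_iff 1).2 (Real.summable_nat_pow_inv.2 one_lt_two)).mul_left C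
    exact ne_top_of_le_ne_top hC.tsum_ofReal_ne_top
      (ENNReal.tsum_le_tsum fun n => h (n + 1) n.succ_ne_zero)
  filter_upwards [ae_tendsto_zero_of_tsum_lintegral_ne_top
    (fun n => ((hF (n + 1) n.succ_ne_zero).pow_const 4).ennreal_ofReal.aemeasurable) hsum] with ω hω
  rw [← tendsto_add_atTop_iff_nat 1, tendsto_zero_iff_abs_tendsto_zero]
  have hpow : Tendsto (fun n => F (n + 1) ω ^ 4) atTop (𝓝 0) := by
    simpa [Function.comp_def, ENNReal.toReal_ofReal, (by decide : Even 4).pow_nonneg] using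
      (ENNReal.tendsto_toReal ENNReal.zero_ne_top).comp hω
  refine ((Real.continuous_sqrt.sqrt.tendsto' 0 0 (by simp)).comp hpow).congr fun n => ?_
  simp only [Function.comp_apply]
  rw [(by ring : F (n + 1) ω ^ 4 = (F (n + 1) ω ^ 2) ^ 2), Real.sqrt_sq (sq_nonneg _),
    Real.sqrt_sq_eq_abs]

lemma lintegral_average_abs_pow_four_le {κ : Type*} {s : Finset κ} {E : κ → Ω → ℝ}
    (hE : ∀ i ∈ s, Measurable (E i)) {C : ℝ≥0∞}
    (h : ∀ i ∈ s, ∫⁻ ω, ENNReal.ofReal (E i ω ^ 4) ∂P ≤ C) :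
    ∫⁻ ω, ENNReal.ofReal (((∑ i ∈ s, |E i ω|) / s.card) ^ 4) ∂P ≤ C := by
  have hjensen (ω) : ENNReal.ofReal (((∑ i ∈ s, |E i ω|) / s.card) ^ 4)
      ≤ (∑ i ∈ s, ENNReal.ofReal (E i ω ^ 4)) / s.card := by
    rcases s.eq_empty_or_nonempty with rfl | hs
    · simp
    have hcard : (0 : ℝ) < s.card := by exact_mod_cast hs.card_pos
    rw [← ENNReal.ofReal_sum_of_nonneg fun i _ => by positivity, ← ENNReal.ofReal_natCast,
      ← ENNReal.ofReal_div_of_pos hcard]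
    refine ENNReal.ofReal_le_ofReal ?_
    have h := pow_sum_div_card_le_sum_pow (s := s) (f := fun i => |E i ω|)
      (fun i _ => abs_nonneg _) 3
    simp only [(by decide : Even 4).pow_abs] at h
    rw [div_pow, le_div_iff₀ hcard]
    refine (le_of_eq ?_).trans h
    field_simp
  calc _ ≤ ∫⁻ ω, (∑ i ∈ s, ENNReal.ofReal (E i ω ^ 4)) / s.card ∂P := lintegral_mono hjensen
    _ = (∑ i ∈ s, ∫⁻ ω, ENNReal.ofReal (E i ω ^ 4) ∂P) / s.card := by
        simp only [div_eq_mul_inv]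
        rw [lintegral_mul_const'' _ (by fun_prop (disch := assumption)), lintegral_finsetSum' _
          fun i hi => ((hE i hi).pow_const 4).ennreal_ofReal.aemeasurable]
    _ ≤ C := ENNReal.div_le_of_le_mul' ((Finset.sum_le_card_nsmul s _ C h).trans_eq
        (nsmul_eq_mul _ _))

end BorelCantelli

section MarchenkoPastur

/-- The limit, as `n → ∞`, of the normalized trace `n⁻¹ tr (zI + n⁻¹ Hᴴ H)⁻¹` for a random matrix
`H` with `n` columns and about `cn` rows: the Stieltjes transform at `-z` of the (rescaled)
Marchenko–Pastur law of ratio `c`. -/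
noncomputable def marchenkoPasturStieltjes (c z : ℝ) : ℝ :=
  (√((1 - c) ^ 2 + 2 * (1 + c) * z + z ^ 2) + (1 - c) - z) / (2 * z)

/-- The limit of `n⁻¹ tr W (zI + W)⁻²` for `W = n⁻¹ Hᴴ H`, with `H` as in
`marchenkoPasturStieltjes`: up to normalization, the power of the regularized zero-forcing
precoder. -/
noncomputable def marchenkoPasturPower (c z : ℝ) : ℝ :=
  ((1 + c + z) / √((1 - c) ^ 2 + 2 * (1 + c) * z + z ^ 2) - 1) / 2

variable {c z : ℝ}

lemma marchenkoPasturStieltjes_pos (hz : 0 < z) :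
    0 < marchenkoPasturStieltjes c z := by
  have : |z - (1 - c)| < √((1 - c) ^ 2 + 2 * (1 + c) * z + z ^ 2) :=
    Real.lt_sqrt_of_sq_lt (by rw [sq_abs]; linarith)
  exact div_pos (by linarith [le_abs_self (z - (1 - c))]) (by positivity)

lemma marchenkoPasturStieltjes_fixedPoint (hc : 0 ≤ c) (hz : 0 < z) :
    z * marchenkoPasturStieltjes c z
      + c * (marchenkoPasturStieltjes c z / (1 + marchenkoPasturStieltjes c z)) = 1 := by
  have hm := marchenkoPasturStieltjes_pos (c := c) hz
  have hsqrt : 2 * z * marchenkoPasturStieltjes c z - (1 - c) + z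
      = √((1 - c) ^ 2 + 2 * (1 + c) * z + z ^ 2) := by
    rw [marchenkoPasturStieltjes]
    field_simp
    ring
  set m := marchenkoPasturStieltjes c z
  have hsq : (2 * z * m - (1 - c) + z) ^ 2 = (1 - c) ^ 2 + 2 * (1 + c) * z + z ^ 2 := by
    rw [hsqrt, Real.sq_sqrt (by positivity)]
  have hquad : z * m ^ 2 + (z + c - 1) * m - 1 = 0 :=
    mul_left_cancel₀ (by positivity : 4 * z ≠ 0) (by linarith)
  field_simp
  linarith

lemma hasDerivAt_marchenkoPasturStieltjes (hc : 0 ≤ c) (hz : 0 < z) :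
    HasDerivAt (marchenkoPasturStieltjes c)
      ((marchenkoPasturPower c z - marchenkoPasturStieltjes c z) / z) z := by
  have hD : 0 < (1 - c) ^ 2 + 2 * (1 + c) * z + z ^ 2 := by positivity
  have := Real.sqrt_pos.2 hD
  have hquad : HasDerivAt (fun z : ℝ => (1 - c) ^ 2 + 2 * (1 + c) * z + z ^ 2)
      (2 * (1 + c) * 1 + 2 * z) z := by
    simpa using (((hasDerivAt_id' z).const_mul (2 * (1 + c))).const_add ((1 - c) ^ 2)).fun_add
      (hasDerivAt_pow 2 z)
  refine ((((hquad.sqrt hD.ne').add_const (1 - c)).sub (hasDerivAt_id z)).div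
    ((hasDerivAt_id z).const_mul 2) (by simpa using hz.ne')).congr_deriv ?_
  simp only [marchenkoPasturStieltjes, marchenkoPasturPower, id, Pi.sub_apply]
  field_simp

lemma mul_abs_sub_le_abs_fixedPoint_sub (hc : 0 ≤ c) (hz : 0 ≤ z) {x y : ℝ} (hx : 0 ≤ x)
    (hy : 0 ≤ y) :
    z * |x - y| ≤ |(z * x + c * (x / (1 + x))) - (z * y + c * (y / (1 + y)))| := by
  have hfactor : (z * x + c * (x / (1 + x))) - (z * y + c * (y / (1 + y)))
      = (z + c / ((1 + x) * (1 + y))) * (x - y) := by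
    field_simp
    ring
  rw [hfactor, abs_mul, abs_of_nonneg (a := z + _) (by positivity)]
  gcongr
  exact le_add_of_nonneg_right (by positivity)

lemma tendsto_marchenkoPasturStieltjes {β : Type*} {l : Filter β} {f q e : β → ℝ} (hc : 0 ≤ c)
    (hz : 0 < z) (hf : ∀ᶠ n in l, 0 ≤ f n) (hq : Tendsto q l (𝓝 c)) (he : Tendsto e l (𝓝 0))
    (h : ∀ᶠ n in l, |1 - z * f n - q n * (f n / (1 + f n))| ≤ e n) :
    Tendsto f l (𝓝 (marchenkoPasturStieltjes c z)) := by
  have hm := marchenkoPasturStieltjes_pos (c := c) hz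
  have hmfix := marchenkoPasturStieltjes_fixedPoint hc hz
  rw [tendsto_iff_dist_tendsto_zero]
  have hbound : Tendsto (fun n => (e n + |q n - c|) / z) l (𝓝 0) := by
    simpa using (he.add (hq.sub_const c).abs).div_const z
  refine squeeze_zero' (.of_forall fun _ => dist_nonneg) ?_ hbound
  filter_upwards [hf, h] with n hfn hn
  have hratio : |f n / (1 + f n)| ≤ 1 := by
    rw [abs_of_nonneg (by positivity), div_le_one (by positivity)]
    linarith
  rw [Real.dist_eq, le_div_iff₀' hz]
  calc z * |f n - marchenkoPasturStieltjes c z|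
      ≤ |z * f n + c * (f n / (1 + f n)) - 1| := by
        simpa only [hmfix] using mul_abs_sub_le_abs_fixedPoint_sub hc hz.le hfn hm.le
    _ = |-(1 - z * f n - q n * (f n / (1 + f n))) - (q n - c) * (f n / (1 + f n))| := by
        ring_nf
    _ ≤ |1 - z * f n - q n * (f n / (1 + f n))| + |q n - c| * |f n / (1 + f n)| := by
        rw [← abs_neg (1 - _ - _), ← abs_mul]
        exact abs_sub _ _
    _ ≤ e n + |q n - c| := by
        gcongr
        exact mul_le_of_le_one_right (abs_nonneg _) hratio

end MarchenkoPastur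

section Tangent

-- The argument of Griffiths' lemma: a convex function traps its slope between difference quotients.
lemma tendsto_of_tangent_le {β : Type*} {l : Filter β} {F : β → ℝ → ℝ} {D : β → ℝ} {m : ℝ → ℝ}
    {z m' : ℝ} (hle : ∀ᶠ y in 𝓝 z, ∀ᶠ n in l, F n z + (y - z) * D n ≤ F n y)
    (hz : Tendsto (F · z) l (𝓝 (m z)))
    (hright : ∃ᶠ y in 𝓝[>] z, Tendsto (F · y) l (𝓝 (m y)))
    (hleft : ∃ᶠ y in 𝓝[<] z, Tendsto (F · y) l (𝓝 (m y)))
    (hm : HasDerivAt m m' z) : Tendsto D l (𝓝 m') := by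
  have hslope := hm.tendsto_slope
  refine tendsto_order.2 ⟨fun a ha => ?_, fun b hb => ?_⟩
  · have hgt : ∀ᶠ y in 𝓝[<] z, a < slope m z y :=
      (hslope.mono_left (nhdsWithin_mono z fun y hy => ne_of_lt hy)).eventually_const_lt ha
    obtain ⟨y, hy, hay, hyz, hyle⟩ := (hleft.and_eventually (hgt.and
      (eventually_mem_nhdsWithin.and (nhdsWithin_le_nhds hle)))).exists
    have hquot := (((hy.sub hz).const_mul (y - z)⁻¹).eventually_const_lt hay)
    filter_upwards [hyle, hquot] with n hn han
    rw [inv_mul_eq_div, lt_div_iff_of_neg' (sub_neg.2 hyz)] at han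
    exact lt_of_mul_lt_mul_of_nonpos_left (by linarith) (sub_nonpos.2 hyz.le)
  · have hlt : ∀ᶠ y in 𝓝[>] z, slope m z y < b :=
      (hslope.mono_left (nhdsWithin_mono z fun y hy => ne_of_gt hy)).eventually_lt_const hb
    obtain ⟨y, hy, hby, hyz, hyle⟩ := (hright.and_eventually (hlt.and
      (eventually_mem_nhdsWithin.and (nhdsWithin_le_nhds hle)))).exists
    have hquot := (((hy.sub hz).const_mul (y - z)⁻¹).eventually_lt_const hby)
    filter_upwards [hyle, hquot] with n hn hnb
    rw [inv_mul_lt_iff₀ (sub_pos.2 hyz)] at hnb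
    exact lt_of_mul_lt_mul_left (by linarith) (sub_nonneg.2 hyz.le)

end Tangent

section SelfConsistency

variable {ι κ : Type*} [Fintype ι] [DecidableEq ι] [DecidableEq κ] {α : ℝ}

lemma abs_div_one_add_sub_le {x y : ℝ} (hx : 0 ≤ x) (hy : 0 ≤ y) :
    |x / (1 + x) - y / (1 + y)| ≤ |x - y| := by
  have hfactor : x / (1 + x) - y / (1 + y) = (x - y) / ((1 + x) * (1 + y)) := by
    field_simp
    ring
  rw [hfactor, abs_div]
  refine div_le_self (abs_nonneg _) ?_
  rw [abs_of_nonneg (by positivity)]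
  nlinarith [mul_nonneg hx hy]

lemma abs_card_sub_re_trace_ridgeResolvent_rowGram_le (hα : 0 < α) (X : κ → ι → ℂ)
    (s : Finset κ) :
    |Fintype.card ι - α * (ridgeResolvent α (rowGram X s)).trace.re
        - s.card * ((ridgeResolvent α (rowGram X s)).trace.re /
          (1 + (ridgeResolvent α (rowGram X s)).trace.re))|
      ≤ ∑ i ∈ s, |ridgeFluctuation α (rowGram X (s.erase i)) (X i)| + s.card / α := by
  set f := (ridgeResolvent α (rowGram X s)).trace.re with hf
  have hf0 : 0 ≤ f := re_trace_ridgeResolvent_nonneg hα (rowGram_posSemidef X s)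
  rw [hf, mul_re_trace_ridgeResolvent_rowGram hα, ← hf, sub_sub_cancel, ← nsmul_eq_mul,
    ← Finset.sum_const, ← Finset.sum_sub_distrib, div_eq_mul_one_div (s.card : ℝ), ← nsmul_eq_mul,
    ← Finset.sum_const, ← Finset.sum_add_distrib]
  refine (Finset.abs_sum_le_sum_abs _ _).trans (Finset.sum_le_sum fun i _ => ?_)
  refine (abs_div_one_add_sub_le (rowForm_ridgeResolvent_nonneg hα (rowGram_posSemidef X _) _)
    hf0).trans ((abs_sub_le _ (ridgeResolvent α (rowGram X (s.erase i))).trace.re _).trans ?_)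
  exact add_le_add le_rfl (abs_re_trace_ridgeResolvent_rowGram_erase_sub_le hα X s i)

end SelfConsistency

section DeterministicLimits

variable {κ : Type*} [DecidableEq κ] {X : ∀ n : ℕ, κ → Fin n → ℂ} {s : ℕ → Finset κ} {c z : ℝ}

lemma tendsto_re_trace_ridgeResolvent_rowGram (hc : 0 ≤ c) (hz : 0 < z)
    (hs : Tendsto (fun n => ((s n).card / n : ℝ)) atTop (𝓝 c))
    (hfluct : Tendsto (fun n : ℕ => (∑ i ∈ s n,
      |ridgeFluctuation (n * z) (rowGram (X n) ((s n).erase i)) (X n i)|) / (s n).card)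
      atTop (𝓝 0)) :
    Tendsto (fun n : ℕ => (ridgeResolvent (n * z) (rowGram (X n) (s n))).trace.re) atTop
      (𝓝 (marchenkoPasturStieltjes c z)) := by
  have herr := hs.mul (hfluct.add
    ((tendsto_natCast_atTop_atTop (R := ℝ)).atTop_mul_const hz).inv_tendsto_atTop)
  rw [add_zero, mul_zero] at herr
  refine tendsto_marchenkoPasturStieltjes hc hz ?_ hs herr ?_
  · filter_upwards [eventually_gt_atTop 0] with n hn
    exact re_trace_ridgeResolvent_nonneg (by positivity) (rowGram_posSemidef _ _)
  · filter_upwards [eventually_gt_atTop 0] with n hn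
    have hn' : (0 : ℝ) < n := Nat.cast_pos.2 hn
    set f := (ridgeResolvent (n * z) (rowGram (X n) (s n))).trace.re
    have hempty : ((s n).card : ℝ) = 0 → ∑ i ∈ s n,
        |ridgeFluctuation (n * z) (rowGram (X n) ((s n).erase i)) (X n i)| = 0 := by
      simp +contextual
    have hscale : n - n * z * f - (s n).card * (f / (1 + f))
        = n * (1 - z * f - (s n).card / n * (f / (1 + f))) := by
      rw [mul_sub, ← mul_assoc (n : ℝ) (_ / _), mul_div_cancel₀ _ hn'.ne']
      ring
    have h := abs_card_sub_re_trace_ridgeResolvent_rowGram_le (by positivity : 0 < n * z) (X n)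
      (s n)
    rw [Fintype.card_fin, hscale, abs_mul, Nat.abs_cast] at h
    refine le_of_mul_le_mul_left (h.trans_eq ?_) hn'
    rw [Pi.inv_apply, ← mul_assoc, mul_div_cancel₀ _ hn'.ne', mul_add,
      mul_div_cancel_of_imp' hempty, div_eq_mul_inv]

lemma tendsto_rowForm_ridgeResolvent_rowGram_erase {m : ℝ} (hz : 0 < z) (k : κ)
    (htrace : Tendsto (fun n : ℕ => (ridgeResolvent (n * z) (rowGram (X n) (s n))).trace.re) atTop
      (𝓝 m))
    (hfluct : Tendsto (fun n : ℕ =>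
      ridgeFluctuation (n * z) (rowGram (X n) ((s n).erase k)) (X n k)) atTop (𝓝 0)) :
    Tendsto (fun n : ℕ => rowForm (ridgeResolvent (n * z) (rowGram (X n) ((s n).erase k))) (X n k))
      atTop (𝓝 m) := by
  have herase : Tendsto (fun n : ℕ =>
      (ridgeResolvent (n * z) (rowGram (X n) ((s n).erase k))).trace.re
        - (ridgeResolvent (n * z) (rowGram (X n) (s n))).trace.re) atTop (𝓝 0) := by
    refine squeeze_zero_norm' ?_
      ((tendsto_natCast_atTop_atTop (R := ℝ)).atTop_mul_const hz).inv_tendsto_atTop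
    filter_upwards [eventually_gt_atTop 0] with n hn
    simpa using abs_re_trace_ridgeResolvent_rowGram_erase_sub_le
      (by positivity : 0 < n * z) (X n) (s n) k
  simpa [ridgeFluctuation] using (hfluct.add herase).add htrace

end DeterministicLimits

section AlmostSureLimits

/-- The rows of the random array `g`, each truncated to its first `n` entries, at the sample
point `ω`. -/
def truncRows {Ω κ : Type*} (g : κ → ℕ → Ω → ℂ) (n : ℕ) (ω : Ω) (i : κ) (j : Fin n) : ℂ :=
  g i j ω

variable {Ω κ : Type*} [MeasurableSpace Ω] {P : Measure Ω} {g : κ → ℕ → Ω → ℂ} {c z : ℝ}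

lemma lintegral_ridgeFluctuation_fin_pow_four_le
    (hg : IsStdComplexGaussianFamily P fun p : κ × ℕ => g p.1 p.2)
    (hmeas : ∀ i j, Measurable (g i j)) (hz : 0 < z) {n : ℕ} (hn : n ≠ 0) {s : Finset κ} {i : κ}
    (hi : i ∉ s) :
    ∫⁻ ω, ENNReal.ofReal (ridgeFluctuation (n * z)
        (rowGram (truncRows g n ω) s) (truncRows g n ω i) ^ 4) ∂P
      ≤ ENNReal.ofReal (6144 / z ^ 4 / n ^ 2) := by
  have : NeZero n := ⟨hn⟩
  have hg' : IsStdComplexGaussianFamily P fun p : κ × Fin n => g p.1 p.2 :=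
    hg.precomp (e := fun p : κ × Fin n => (p.1, (p.2 : ℕ)))
      (Function.injective_id.prodMap Fin.val_injective)
  refine (lintegral_ridgeFluctuation_row_pow_four_le (X := fun i (j : Fin n) => g i j) hg'
    (fun i j => hmeas i j) (by positivity : 0 < n * z) hi).trans_eq ?_
  rw [Fintype.card_fin]
  field_simp

lemma ae_tendsto_ridgeFluctuation
    (hg : IsStdComplexGaussianFamily P fun p : κ × ℕ => g p.1 p.2)
    (hmeas : ∀ i j, Measurable (g i j)) (hz : 0 < z) {s : ℕ → Finset κ} {i : κ}
    (hi : ∀ n, i ∉ s n) :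
    ∀ᵐ ω ∂P, Tendsto (fun n : ℕ => ridgeFluctuation (n * z)
      (rowGram (truncRows g n ω) (s n)) (truncRows g n ω i)) atTop (𝓝 0) :=
  ae_tendsto_zero_of_lintegral_pow_four_le
    (fun n hn => measurable_ridgeFluctuation_row (X := fun i (j : Fin n) => g i j)
      (fun i j => hmeas i j) (by positivity) _ _)
    fun n hn => lintegral_ridgeFluctuation_fin_pow_four_le hg hmeas hz hn (hi n)

lemma ae_tendsto_average_abs_ridgeFluctuation_erase [DecidableEq κ]
    (hg : IsStdComplexGaussianFamily P fun p : κ × ℕ => g p.1 p.2)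
    (hmeas : ∀ i j, Measurable (g i j)) (hz : 0 < z) (s : ℕ → Finset κ) :
    ∀ᵐ ω ∂P, Tendsto (fun n : ℕ => (∑ i ∈ s n, |ridgeFluctuation (n * z)
      (rowGram (truncRows g n ω) ((s n).erase i)) (truncRows g n ω i)|) / (s n).card)
      atTop (𝓝 0) := by
  have hF {n : ℕ} (hn : n ≠ 0) (i : κ) : Measurable fun ω => ridgeFluctuation (n * z)
      (rowGram (truncRows g n ω) ((s n).erase i)) (truncRows g n ω i) :=
    measurable_ridgeFluctuation_row (X := fun i (j : Fin n) => g i j)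
      (fun i j => hmeas i j) (by positivity) _ _
  refine ae_tendsto_zero_of_lintegral_pow_four_le
    (fun n hn => (Finset.measurable_sum _ fun i _ => (hF hn i).abs).div_const _)
    fun n hn => lintegral_average_abs_pow_four_le (fun i _ => hF hn i) fun i _ =>
      lintegral_ridgeFluctuation_fin_pow_four_le hg hmeas hz hn (Finset.notMem_erase i _)

lemma ae_tendsto_re_trace_ridgeResolvent_rowGram
    (hg : IsStdComplexGaussianFamily P fun p : κ × ℕ => g p.1 p.2)
    (hmeas : ∀ i j, Measurable (g i j)) (hc : 0 ≤ c) (hz : 0 < z) {s : ℕ → Finset κ}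
    (hs : Tendsto (fun n => ((s n).card / n : ℝ)) atTop (𝓝 c)) :
    ∀ᵐ ω ∂P, Tendsto (fun n : ℕ =>
      (ridgeResolvent (n * z) (rowGram (truncRows g n ω) (s n))).trace.re) atTop
      (𝓝 (marchenkoPasturStieltjes c z)) := by
  classical
  filter_upwards [ae_tendsto_average_abs_ridgeFluctuation_erase hg hmeas hz s] with ω hω
  exact tendsto_re_trace_ridgeResolvent_rowGram hc hz hs hω

lemma ae_tendsto_rowForm_ridgeResolvent_rowGram_erase [DecidableEq κ]
    (hg : IsStdComplexGaussianFamily P fun p : κ × ℕ => g p.1 p.2)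
    (hmeas : ∀ i j, Measurable (g i j)) (hc : 0 ≤ c) (hz : 0 < z) {s : ℕ → Finset κ}
    (hs : Tendsto (fun n => ((s n).card / n : ℝ)) atTop (𝓝 c)) (k : κ) :
    ∀ᵐ ω ∂P, Tendsto (fun n : ℕ => rowForm (ridgeResolvent (n * z)
      (rowGram (truncRows g n ω) ((s n).erase k))) (truncRows g n ω k)) atTop
      (𝓝 (marchenkoPasturStieltjes c z)) := by
  filter_upwards [ae_tendsto_re_trace_ridgeResolvent_rowGram hg hmeas hc hz hs,
    ae_tendsto_ridgeFluctuation hg hmeas hz fun n => Finset.notMem_erase k (s n)] with ω htrace hω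
  exact tendsto_rowForm_ridgeResolvent_rowGram_erase
    (X := fun n => truncRows g n ω) hz k htrace hω

lemma ae_tendsto_add_mul_of_tangent_le {F : ℕ → ℝ → Ω → ℝ} {D : ℕ → Ω → ℝ} (hc : 0 ≤ c)
    (hz : 0 < z) (hle : ∀ ω, ∀ y > 0, ∀ᶠ n in atTop, F n z ω + (y - z) * D n ω ≤ F n y ω)
    (hF : ∀ y > 0, ∀ᵐ ω ∂P, Tendsto (F · y ω) atTop (𝓝 (marchenkoPasturStieltjes c y))) :
    ∀ᵐ ω ∂P, Tendsto (fun n => F n z ω + z * D n ω) atTop (𝓝 (marchenkoPasturPower c z)) := by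
  have hpos : ∀ᶠ y in 𝓝 z, 0 < y := eventually_gt_nhds hz
  have hae := hpos.mono hF
  filter_upwards [hF z hz,
    ae_frequently_of_frequently_ae (l := 𝓝[>] z) (hae.filter_mono nhdsWithin_le_nhds).frequently,
    ae_frequently_of_frequently_ae (l := 𝓝[<] z) (hae.filter_mono nhdsWithin_le_nhds).frequently]
    with ω hω hright hleft
  have hD := tendsto_of_tangent_le (hpos.mono (hle ω)) hω hright hleft
    (hasDerivAt_marchenkoPasturStieltjes hc hz)
  simpa [mul_div_cancel₀ _ hz.ne'] using hω.add (hD.const_mul z)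

lemma ae_tendsto_re_trace_ridgeResolvent_mul_rowGram_mul
    (hg : IsStdComplexGaussianFamily P fun p : κ × ℕ => g p.1 p.2)
    (hmeas : ∀ i j, Measurable (g i j)) (hc : 0 ≤ c) (hz : 0 < z) {s : ℕ → Finset κ}
    (hs : Tendsto (fun n => ((s n).card / n : ℝ)) atTop (𝓝 c)) :
    ∀ᵐ ω ∂P, Tendsto (fun n : ℕ =>
      letI W := rowGram (truncRows g n ω) (s n)
      (ridgeResolvent (n * z) W * W * ridgeResolvent (n * z) W).trace.re) atTop
      (𝓝 (marchenkoPasturPower c z)) := by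
  let R (n : ℕ) (y : ℝ) (ω : Ω) : Matrix (Fin n) (Fin n) ℂ :=
    ridgeResolvent (n * y) (rowGram (truncRows g n ω) (s n))
  have h := ae_tendsto_add_mul_of_tangent_le (F := fun n y ω => (R n y ω).trace.re)
    (D := fun n ω => -(n * (R n z ω ^ 2).trace.re)) hc hz (fun ω y hy => ?_)
    fun y hy => ae_tendsto_re_trace_ridgeResolvent_rowGram hg hmeas hc hy hs
  · filter_upwards [h] with ω hω
    refine hω.congr' ?_
    filter_upwards [eventually_ne_atTop 0] with n hn
    rw [ridgeResolvent_mul_mul_ridgeResolvent (by positivity) (rowGram_posSemidef _ _), trace_sub,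
      trace_smul, Complex.sub_re, smul_eq_mul, Complex.re_ofReal_mul]
    ring
  · filter_upwards [eventually_ne_atTop 0] with n hn
    have := re_trace_ridgeResolvent_add_le (by positivity : 0 < n * z)
      (by positivity : 0 < n * y) (rowGram_posSemidef (truncRows g n ω) (s n))
    linarith

lemma ae_tendsto_rowForm_ridgeResolvent_mul_rowGram_erase_mul [DecidableEq κ]
    (hg : IsStdComplexGaussianFamily P fun p : κ × ℕ => g p.1 p.2)
    (hmeas : ∀ i j, Measurable (g i j)) (hc : 0 ≤ c) (hz : 0 < z) {s : ℕ → Finset κ}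
    (hs : Tendsto (fun n => ((s n).card / n : ℝ)) atTop (𝓝 c)) (k : κ) :
    ∀ᵐ ω ∂P, Tendsto (fun n : ℕ =>
      letI W := rowGram (truncRows g n ω) ((s n).erase k)
      rowForm (ridgeResolvent (n * z) W * W * ridgeResolvent (n * z) W) (truncRows g n ω k)) atTop
      (𝓝 (marchenkoPasturPower c z)) := by
  let R (n : ℕ) (y : ℝ) (ω : Ω) : Matrix (Fin n) (Fin n) ℂ :=
    ridgeResolvent (n * y) (rowGram (truncRows g n ω) ((s n).erase k))
  have h := ae_tendsto_add_mul_of_tangent_le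
    (F := fun n y ω => rowForm (R n y ω) (truncRows g n ω k))
    (D := fun n ω => -(n * rowForm (R n z ω ^ 2) (truncRows g n ω k))) hc hz (fun ω y hy => ?_)
    fun y hy => ae_tendsto_rowForm_ridgeResolvent_rowGram_erase hg hmeas hc hy hs k
  · filter_upwards [h] with ω hω
    refine hω.congr' ?_
    filter_upwards [eventually_ne_atTop 0] with n hn
    rw [ridgeResolvent_mul_mul_ridgeResolvent (by positivity) (rowGram_posSemidef _ _),
      rowForm_sub, rowForm_smul]
    ring
  · filter_upwards [eventually_ne_atTop 0] with n hn
    have := rowForm_ridgeResolvent_add_le (by positivity : 0 < n * z) (by positivity : 0 < n * y)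
      (rowGram_posSemidef (truncRows g n ω) ((s n).erase k)) (truncRows g n ω k)
    linarith

end AlmostSureLimits

section RegularizedZeroForcing

lemma rowGram_map {ι κ σ : Type*} [Fintype σ] (X : κ → ι → ℂ) (e : σ ↪ κ) :
    rowGram X (Finset.univ.map e)
      = (of fun (i : σ) j => X (e i) j)ᴴ * of fun (i : σ) j => X (e i) j := by
  ext a b
  simp [rowGram, Matrix.mul_apply, Matrix.sum_apply, vecMulVec_apply]

lemma conjTranspose_mul_self_fin {ι : Type*} (X : ℕ → ι → ℂ) (q : ℕ) :
    (of fun (i : Fin q) j => X i j)ᴴ * (of fun (i : Fin q) j => X i j)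
      = rowGram X (Finset.range q) := by
  rw [← Nat.Iio_eq_range, ← Fin.map_valEmbedding_univ, rowGram_map]
  rfl

lemma conjTranspose_mul_self_submatrix_ne {ι : Type*} (X : ℕ → ι → ℂ) (q k : ℕ) :
    ((of fun (i : Fin q) j => X i j).submatrix
        (fun i : {i : Fin q // (i : ℕ) ≠ k} => (i : Fin q)) id)ᴴ *
      (of fun (i : Fin q) j => X i j).submatrix
        (fun i : {i : Fin q // (i : ℕ) ≠ k} => (i : Fin q)) id
      = rowGram X ((Finset.range q).erase k) := by
  have hrows : (Finset.range q).erase k = Finset.univ.map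
      ((Function.Embedding.subtype fun i : Fin q => (i : ℕ) ≠ k).trans Fin.valEmbedding) := by
    ext i
    simp [Fin.exists_iff, and_comm]
  rw [hrows, rowGram_map]
  rfl

lemma one_div_mul_re_trace_smul_mul_inv_sq {ι : Type*} [Fintype ι] [DecidableEq ι] {n : ℕ}
    (hn : n ≠ 0) {z : ℝ} (hz : 0 < z) {W : Matrix ι ι ℂ} (hW : W.PosSemidef) :
    1 / (n : ℝ) * (((1 / (n : ℂ)) • W * (((z : ℂ) • 1 + (1 / (n : ℂ)) • W)⁻¹) ^ 2).trace).re
      = (ridgeResolvent (n * z) W * W * ridgeResolvent (n * z) W).trace.re := by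
  have hnC : (n : ℂ) ≠ 0 := Nat.cast_ne_zero.2 hn
  have hscale : ((z : ℂ) • 1 + (1 / (n : ℂ)) • W)⁻¹ = (n : ℂ) • ridgeResolvent (n * z) W := by
    refine inv_eq_left_inv ?_
    have h := nonsing_inv_mul _ (isUnit_det_smul_one_add (by positivity : 0 < n * z) hW)
    rwa [smul_mul_assoc, ← mul_smul_comm, smul_add, smul_smul, smul_smul,
      mul_one_div_cancel hnC, one_smul, ← Complex.ofReal_natCast, ← Complex.ofReal_mul]
  rw [hscale, smul_pow, smul_mul_smul_comm, trace_smul, mul_assoc,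
    trace_mul_comm (ridgeResolvent _ _), mul_assoc, ← sq,
    show 1 / (n : ℂ) * (n : ℂ) ^ 2 = (n : ℝ) by push_cast; field_simp, smul_eq_mul,
    Complex.re_ofReal_mul, one_div, inv_mul_cancel_left₀ (Nat.cast_ne_zero.2 hn)]

lemma inv_div_smul_one_add {ι : Type*} [Fintype ι] [DecidableEq ι] (n : ℕ) (Pt : ℝ)
    (W : Matrix ι ι ℂ) :
    (((n : ℂ) / (Pt : ℂ)) • 1 + W)⁻¹ = ridgeResolvent (n * Pt⁻¹) W := by
  simp [ridgeResolvent, div_eq_mul_inv]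

section ClosedForm

variable {c Pt : ℝ}

lemma marchenkoPasturPower_pos {z : ℝ} (hc : 0 < c) (hz : 0 < z) :
    0 < marchenkoPasturPower c z := by
  have : √((1 - c) ^ 2 + 2 * (1 + c) * z + z ^ 2) < 1 + c + z := by
    rw [Real.sqrt_lt' (by positivity)]
    linarith
  have : 1 < (1 + c + z) / √((1 - c) ^ 2 + 2 * (1 + c) * z + z ^ 2) :=
    (one_lt_div (by positivity)).2 this
  exact half_pos (sub_pos.2 this)

lemma sqrt_marchenkoPastur_inv (hPt : 0 < Pt) :
    √((1 - c) ^ 2 + 2 * (1 + c) * Pt⁻¹ + Pt⁻¹ ^ 2)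
      = √((1 - c) ^ 2 * Pt ^ 2 + 2 * (1 + c) * Pt + 1) / Pt := by
  rw [eq_div_iff hPt.ne', ← Real.sqrt_sq hPt.le, ← Real.sqrt_mul' _ (sq_nonneg Pt),
    Real.sqrt_sq hPt.le]
  congr 1
  field_simp

lemma marchenkoPasturStieltjes_inv (hPt : 0 < Pt) :
    marchenkoPasturStieltjes c Pt⁻¹
      = 1 / 2 * (√((1 - c) ^ 2 * Pt ^ 2 + 2 * (1 + c) * Pt + 1) + (1 - c) * Pt - 1) := by
  rw [marchenkoPasturStieltjes, sqrt_marchenkoPastur_inv hPt]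
  field_simp

lemma marchenkoPasturPower_inv (hc : 0 ≤ c) (hPt : 0 < Pt) :
    marchenkoPasturPower c Pt⁻¹ = marchenkoPasturStieltjes c Pt⁻¹ - Pt / 2 *
      ((Pt * (c - 1) ^ 2 + c + 1) / √(Pt ^ 2 * (c - 1) ^ 2 + 2 * (c + 1) * Pt + 1)
        + (1 - c)) := by
  rw [marchenkoPasturPower, sqrt_marchenkoPastur_inv hPt, marchenkoPasturStieltjes_inv hPt,
    show Pt ^ 2 * (c - 1) ^ 2 + 2 * (c + 1) * Pt + 1
      = (1 - c) ^ 2 * Pt ^ 2 + 2 * (1 + c) * Pt + 1 by ring]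
  have hdisc : 0 < (1 - c) ^ 2 * Pt ^ 2 + 2 * (1 + c) * Pt + 1 := by positivity
  have hsqrt := Real.sqrt_pos.2 hdisc
  have hsq := Real.sq_sqrt hdisc.le
  set S := √((1 - c) ^ 2 * Pt ^ 2 + 2 * (1 + c) * Pt + 1)
  field_simp
  linear_combination -hsq

end ClosedForm

lemma tendsto_sinr {β : Type*} {l : Filter β} {A B T : β → ℝ} {a t Pt G : ℝ} (ha : 0 < a)
    (ht : 0 < t) (hPt : 0 < Pt) (hG : 0 < G) (hA : Tendsto A l (𝓝 a)) (hB : Tendsto B l (𝓝 t))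
    (hT : Tendsto T l (𝓝 t)) :
    Tendsto (fun x => (A x ^ 2 * (Pt / T x) / G) / ((1 + A x) ^ 2 + Pt / T x / G * B x)) l
      (𝓝 ((a ^ 2 * (Pt / t) / G) / ((1 + a) ^ 2 + Pt / G))) := by
  have hρ : Tendsto (fun x => Pt / T x) l (𝓝 (Pt / t)) := tendsto_const_nhds.div hT ht.ne'
  rw [show (1 + a) ^ 2 + Pt / G = (1 + a) ^ 2 + Pt / t / G * t by field_simp]
  exact (((hA.pow 2).mul hρ).div_const G).div
    (((hA.const_add 1).pow 2).add ((hρ.div_const G).mul hB)) (by positivity)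

end RegularizedZeroForcing

end

theorem stmt_4_general {Ω : Type*} [MeasurableSpace Ω] (P : Measure Ω) (c : ℝ) (hc : 0 < c)
    (Pt : ℝ) (hPt : 0 < Pt) (G : ℝ) (hG : 0 < G) (Q : ℕ → ℕ)
    (hQ : Filter.Tendsto (fun l : ℕ => (Q l / l : ℝ)) Filter.atTop (nhds c))
    (g : ℕ → ℕ → Ω → ℂ) (hmeas : ∀ i j, Measurable (g i j))
    (hgauss : IsStdComplexGaussianFamily P (fun p : ℕ × ℕ => g p.1 p.2)) (k : ℕ) :
    let SINR : ℕ → Ω → ℝ := fun l ω =>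
      let H : Matrix (Fin (Q l)) (Fin l) ℂ := Matrix.of fun i j => g i j ω
      let Hmk : Matrix {i : Fin (Q l) // (i : ℕ) ≠ k} (Fin l) ℂ :=
        H.submatrix (fun i : {i : Fin (Q l) // (i : ℕ) ≠ k} => (i : Fin (Q l))) id
      let hk : Fin l → ℂ := fun j => g k j ω
      let Minv : Matrix (Fin l) (Fin l) ℂ :=
        (((l : ℂ) / (Pt : ℂ)) • (1 : Matrix (Fin l) (Fin l) ℂ) + Hmkᴴ * Hmk)⁻¹
      let A : ℂ := hk ⬝ᵥ Minv.mulVec (star hk)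
      let B : ℂ := hk ⬝ᵥ (Minv * (Hmkᴴ * Hmk) * Minv).mulVec (star hk)
      let ρ2 : ℝ := Pt / ((1 / (l : ℝ)) *
        (Matrix.trace ((1 / (l : ℂ)) • (Hᴴ * H) *
          ((((1 : ℂ) / (Pt : ℂ)) • (1 : Matrix (Fin l) (Fin l) ℂ)
            + (1 / (l : ℂ)) • (Hᴴ * H))⁻¹) ^ 2)).re)
      (A.re ^ 2 * ρ2 / G) / ((1 + A.re) ^ 2 + ρ2 / G * B.re)
    let a : ℝ := 1 / 2 * (Real.sqrt ((1 - c) ^ 2 * Pt ^ 2 + 2 * (1 + c) * Pt + 1)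
      + (1 - c) * Pt - 1)
    let p2 : ℝ := Pt / (a - Pt / 2 *
      ((Pt * (c - 1) ^ 2 + c + 1) / Real.sqrt (Pt ^ 2 * (c - 1) ^ 2 + 2 * (c + 1) * Pt + 1)
        + (1 - c)))
    let sinrLim : ℝ := (a ^ 2 * p2 / G) / ((1 + a) ^ 2 + Pt / G)
    ∀ᵐ ω ∂P,
      Filter.Tendsto (fun l : ℕ => SINR l ω) Filter.atTop (nhds sinrLim) ∧
      Filter.Tendsto (fun l : ℕ => Real.log (1 + SINR l ω)) Filter.atTop
        (nhds (Real.log (1 + sinrLim))) := by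
  intro SINR a p2 sinrLim
  have hz : 0 < Pt⁻¹ := inv_pos.2 hPt
  have hs : Filter.Tendsto (fun l => ((Finset.range (Q l)).card / l : ℝ)) Filter.atTop
      (nhds c) := by
    simpa only [Finset.card_range] using hQ
  have ha : marchenkoPasturStieltjes c Pt⁻¹ = a := marchenkoPasturStieltjes_inv hPt
  have ha_pos : 0 < a := ha ▸ marchenkoPasturStieltjes_pos hz
  have hp : p2 = Pt / marchenkoPasturPower c Pt⁻¹ := by rw [marchenkoPasturPower_inv hc.le hPt, ha]
  have hpower_pos := marchenkoPasturPower_pos hc hz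
  have hlim_pos : 0 < sinrLim := by simp only [sinrLim, hp]; positivity
  filter_upwards [ae_tendsto_rowForm_ridgeResolvent_rowGram_erase hgauss hmeas hc.le hz hs k,
    ae_tendsto_rowForm_ridgeResolvent_mul_rowGram_erase_mul hgauss hmeas hc.le hz hs k,
    ae_tendsto_re_trace_ridgeResolvent_mul_rowGram_mul hgauss hmeas hc.le hz hs] with ω hA hB hT
  have hSINR : Filter.Tendsto (SINR · ω) Filter.atTop (nhds sinrLim) := by
    simp only [sinrLim, hp]
    refine (tendsto_sinr ha_pos hpower_pos hPt hG (ha ▸ hA) hB hT).congr' ?_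
    filter_upwards [Filter.eventually_ne_atTop 0] with l hl
    simp only [SINR, conjTranspose_mul_self_submatrix_ne (fun i (j : Fin l) => g i j ω),
      conjTranspose_mul_self_fin (fun i (j : Fin l) => g i j ω), inv_div_smul_one_add]
    rw [← one_div_mul_re_trace_smul_mul_inv_sq hl hz (rowGram_posSemidef _ _)]
    unfold rowForm truncRows
    simp only [Complex.ofReal_inv, one_div]
  exact ⟨hSINR, (hSINR.const_add 1).log (by positivity)⟩

/-- RZF-based vector coded caching. With `Q_L = ⌈cL⌉`, `α_L = L/P_t`,
`H_L` the i.i.d. standard complex Gaussian `Q_L×L` matrix, `H₋ₖ` the matrix with the `k`-th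
row removed, `A_L = hₖᵀ(α_L I + H₋ₖᴴH₋ₖ)⁻¹hₖ*`,
`B_L = hₖᵀ(α_L I + H₋ₖᴴH₋ₖ)⁻¹H₋ₖᴴH₋ₖ(α_L I + H₋ₖᴴH₋ₖ)⁻¹hₖ*` and
`ρ_L² = P_t/((1/L)Tr{(1/L)H_LᴴH_L((1/P_t)I + (1/L)H_LᴴH_L)⁻²})`, the RZF SINR
`(A_L²ρ_L²/G)/((1+A_L)² + (ρ_L²/G)B_L)` converges a.s. to
`(a²p²/G)/((1+a)² + P_t/G)` with `a`, `p²` as in the theorem; consequently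
`ln(1 + SINR_L) → ln(1 + (a²p²/G)/((1+a)² + P_t/G))` a.s. -/
theorem stmt_4 {Ω : Type*} [MeasurableSpace Ω] (P : Measure Ω) [IsProbabilityMeasure P]
    (c : ℝ) (hc : c ∈ Set.Ioo (0 : ℝ) 1) (Pt : ℝ) (hPt : 0 < Pt) (G : ℕ) (hG : 1 ≤ G)
    (g : ℕ → ℕ → Ω → ℂ) (hmeas : ∀ i j, Measurable (g i j))
    (hgauss : IsStdComplexGaussianFamily P (fun p : ℕ × ℕ => g p.1 p.2)) (k : ℕ) :
    let SINR : ℕ → Ω → ℝ := fun l ω =>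
      let Q : ℕ := Nat.ceil (c * l)
      let H : Matrix (Fin Q) (Fin l) ℂ := Matrix.of fun i j => g i j ω
      let Hmk : Matrix {i : Fin Q // (i : ℕ) ≠ k} (Fin l) ℂ :=
        H.submatrix (fun i : {i : Fin Q // (i : ℕ) ≠ k} => (i : Fin Q)) id
      let hk : Fin l → ℂ := fun j => g k j ω
      let Minv : Matrix (Fin l) (Fin l) ℂ :=
        (((l : ℂ) / (Pt : ℂ)) • (1 : Matrix (Fin l) (Fin l) ℂ) + Hmkᴴ * Hmk)⁻¹
      let A : ℂ := hk ⬝ᵥ Minv.mulVec (star hk)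
      let B : ℂ := hk ⬝ᵥ (Minv * (Hmkᴴ * Hmk) * Minv).mulVec (star hk)
      let ρ2 : ℝ := Pt / ((1 / (l : ℝ)) *
        (Matrix.trace ((1 / (l : ℂ)) • (Hᴴ * H) *
          ((((1 : ℂ) / (Pt : ℂ)) • (1 : Matrix (Fin l) (Fin l) ℂ)
            + (1 / (l : ℂ)) • (Hᴴ * H))⁻¹) ^ 2)).re)
      (A.re ^ 2 * ρ2 / G) / ((1 + A.re) ^ 2 + ρ2 / G * B.re)
    let a : ℝ := 1 / 2 * (Real.sqrt ((1 - c) ^ 2 * Pt ^ 2 + 2 * (1 + c) * Pt + 1)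
      + (1 - c) * Pt - 1)
    let p2 : ℝ := Pt / (a - Pt / 2 *
      ((Pt * (c - 1) ^ 2 + c + 1) / Real.sqrt (Pt ^ 2 * (c - 1) ^ 2 + 2 * (c + 1) * Pt + 1)
        + (1 - c)))
    let sinrLim : ℝ := (a ^ 2 * p2 / G) / ((1 + a) ^ 2 + Pt / G)
    ∀ᵐ ω ∂P,
      Filter.Tendsto (fun l : ℕ => SINR l ω) Filter.atTop (nhds sinrLim) ∧
      Filter.Tendsto (fun l : ℕ => Real.log (1 + SINR l ω)) Filter.atTop
        (nhds (Real.log (1 + sinrLim))) :=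
  stmt_4_general P c hc.1 Pt hPt G (by exact_mod_cast hG) (fun l => ⌈c * l⌉₊)
    ((tendsto_nat_ceil_mul_div_atTop hc.1.le).comp tendsto_natCast_atTop_atTop) g hmeas hgauss k
end

section
/- Let P_t > 0, let G ≥ 1 be an integer, set Ω = P_t/(P_t + G), and let ζ > 0 and L > 0 be reals. Define the effective MF rate 𝓡(c) = (1 − ζc)·c·G·L·ln(1 + Ω/c) for c ∈ (0, 1/ζ). Then 𝓡 is strictly concave on (0, 1/ζ), there exists a unique c* ∈ (0, 1/ζ) satisfying (1 − 2ζc*)·ln(1 + Ω/c*) − Ω·(1 − ζc*)/(Ω + c*) = 0, and this c* is the unique global maximizer of 𝓡 over (0, 1/ζ). -/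
/-!
Up to the factor `G * L`, the derivative of `𝓡` is the left-hand side `F` of the stationarity
equation. With `u = Ω / (Ω + c)`,
`F' c = -2ζ (log (1 + Ω / c) - (u + u² / 2)) - u² / c`,
and `log (1 + Ω / c) = -log (1 - u)` dominates its second-order expansion `u + u² / 2`. Hence `F`
is strictly decreasing, so `𝓡` is strictly concave and its critical point, if any, is its unique
maximizer. One exists since `F` tends to `+∞` at `0` and is negative at `1 / (2ζ)`.
-/

open Filter Real Set Topology

theorem strictConcaveOn_of_hasDerivAt_of_strictAntiOn {s : Set ℝ} {f f' : ℝ → ℝ} (hs : Convex ℝ s)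
    (hf : ContinuousOn f s) (hf' : ∀ x ∈ interior s, HasDerivAt f (f' x) x)
    (hanti : StrictAntiOn f' (interior s)) : StrictConcaveOn ℝ s f :=
  StrictAntiOn.strictConcaveOn_of_deriv hs hf (hanti.congr fun x hx => (hf' x hx).deriv.symm)

theorem isMaxOn_of_concaveOn_of_hasDerivAt_zero {s : Set ℝ} {f : ℝ → ℝ} {x : ℝ}
    (hf : ConcaveOn ℝ s f) (hx : x ∈ interior s) (hfx : HasDerivAt f 0 x) : IsMaxOn f s x := by
  have hneg : HasDerivWithinAt (-f) 0 (Ioi x) x := by simpa using hfx.neg.hasDerivWithinAt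
  have hmin : IsMinOn (-f) s x :=
    hf.neg.isMinOn_of_rightDeriv_eq_zero hx (hneg.derivWithin (uniqueDiffWithinAt_Ioi x))
  simpa using hmin.neg

theorem div_one_add_add_sq_div_two_le_log_one_add {x : ℝ} (hx : 0 ≤ x) :
    x / (1 + x) + (x / (1 + x)) ^ 2 / 2 ≤ log (1 + x) := by
  refine le_trans ?_ (le_log_one_add_of_nonneg hx)
  have hdiff : 2 * x / (x + 2) - (x / (1 + x) + (x / (1 + x)) ^ 2 / 2) =
      x ^ 3 / (2 * (x + 2) * (1 + x) ^ 2) := by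
    field_simp
    ring
  rw [← sub_nonneg, hdiff]
  positivity

theorem hasDerivAt_log_one_add_div {Ω c : ℝ} (hΩ : 0 ≤ Ω) (hc : 0 < c) :
    HasDerivAt (fun c => log (1 + Ω / c)) (-(Ω / (c * (Ω + c)))) c := by
  have hinner : HasDerivAt (fun c => 1 + Ω / c) (Ω * -(c ^ 2)⁻¹) c :=
    ((hasDerivAt_inv hc.ne').const_mul Ω).const_add 1
  refine (hinner.log (by positivity)).congr_deriv ?_
  field_simp
  ring

theorem tendsto_log_one_add_div_nhdsGT_zero {Ω : ℝ} (hΩ : 0 < Ω) :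
    Tendsto (fun c => log (1 + Ω / c)) (𝓝[>] 0) atTop :=
  tendsto_log_atTop.comp <|
    tendsto_atTop_add_const_left _ 1 (tendsto_inv_nhdsGT_zero.const_mul_atTop hΩ)

/-- The effective sum-rate `𝓡(c)` of the MF scheme, for an arbitrary value of `Ω` and with `G`
allowed to be real. -/
noncomputable def effectiveRate (Ω ζ G L c : ℝ) : ℝ :=
  (1 - ζ * c) * c * G * L * log (1 + Ω / c)

/-- The derivative `𝓡'(c)` of the effective sum-rate, divided by `G * L`; its zeros are the
stationary points of `𝓡`. -/
noncomputable def marginalRate (Ω ζ c : ℝ) : ℝ :=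
  (1 - 2 * ζ * c) * log (1 + Ω / c) - Ω * (1 - ζ * c) / (Ω + c)

section

variable {Ω ζ G L c : ℝ}

theorem hasDerivAt_effectiveRate (hΩ : 0 ≤ Ω) (hc : 0 < c) :
    HasDerivAt (effectiveRate Ω ζ G L) (G * L * marginalRate Ω ζ c) c := by
  have htrain : HasDerivAt (fun c => 1 - ζ * c) (-ζ) c := by
    simpa using ((hasDerivAt_id c).const_mul ζ).const_sub 1
  have hprod := (((htrain.mul (hasDerivAt_id c)).mul_const G).mul_const L).mul
    (hasDerivAt_log_one_add_div hΩ hc)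
  refine hprod.congr_deriv ?_
  simp only [marginalRate, id, Pi.mul_apply]
  field_simp
  ring

theorem hasDerivAt_marginalRate (hΩ : 0 ≤ Ω) (hc : 0 < c) :
    HasDerivAt (marginalRate Ω ζ)
      (-(2 * ζ) * (log (1 + Ω / c) - (Ω / (Ω + c) + (Ω / (Ω + c)) ^ 2 / 2)) -
        (Ω / (Ω + c)) ^ 2 / c) c := by
  have hcoeff : HasDerivAt (fun c => 1 - 2 * ζ * c) (-(2 * ζ)) c := by
    simpa using ((hasDerivAt_id c).const_mul (2 * ζ)).const_sub 1
  have hnum : HasDerivAt (fun c => Ω * (1 - ζ * c)) (Ω * -ζ) c := by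
    simpa using (((hasDerivAt_id c).const_mul ζ).const_sub 1).const_mul Ω
  have hden : HasDerivAt (fun c => Ω + c) 1 c := (hasDerivAt_id c).const_add Ω
  have hsub := (hcoeff.mul (hasDerivAt_log_one_add_div hΩ hc)).sub
    (hnum.div hden (by positivity))
  refine hsub.congr_deriv ?_
  field_simp
  ring

theorem strictAntiOn_marginalRate (hΩ : 0 < Ω) (hζ : 0 ≤ ζ) :
    StrictAntiOn (marginalRate Ω ζ) (Ioi 0) := by
  refine strictAntiOn_of_hasDerivWithinAt_neg (convex_Ioi 0)
    (fun c hc => (hasDerivAt_marginalRate hΩ.le hc).continuousAt.continuousWithinAt)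
    (fun c hc => (hasDerivAt_marginalRate hΩ.le (interior_subset hc)).hasDerivWithinAt)
    fun c hc => ?_
  have hc : 0 < c := interior_subset hc
  have hu : Ω / c / (1 + Ω / c) = Ω / (Ω + c) := by
    field_simp
    ring
  have hlog := div_one_add_add_sq_div_two_le_log_one_add (div_pos hΩ hc).le
  rw [hu] at hlog
  have hfirst : 0 ≤ 2 * ζ * (log (1 + Ω / c) - (Ω / (Ω + c) + (Ω / (Ω + c)) ^ 2 / 2)) :=
    mul_nonneg (by positivity) (sub_nonneg.2 hlog)
  have hsecond : 0 < (Ω / (Ω + c)) ^ 2 / c := by positivity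
  linarith

theorem strictConcaveOn_effectiveRate (hΩ : 0 < Ω) (hζ : 0 ≤ ζ) (hGL : 0 < G * L) :
    StrictConcaveOn ℝ (Ioi 0) (effectiveRate Ω ζ G L) :=
  strictConcaveOn_of_hasDerivAt_of_strictAntiOn (convex_Ioi 0)
    (fun _ hc => (hasDerivAt_effectiveRate hΩ.le hc).continuousAt.continuousWithinAt)
    (fun _ hc => hasDerivAt_effectiveRate hΩ.le (interior_subset hc))
    ((strictMono_mul_left_of_pos hGL).comp_strictAntiOn
      ((strictAntiOn_marginalRate hΩ hζ).mono interior_subset))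

theorem isMaxOn_effectiveRate_of_marginalRate_eq_zero (hΩ : 0 < Ω) (hζ : 0 ≤ ζ)
    (hGL : 0 < G * L) (hc : 0 < c) (hcrit : marginalRate Ω ζ c = 0) :
    IsMaxOn (effectiveRate Ω ζ G L) (Ioi 0) c := by
  refine isMaxOn_of_concaveOn_of_hasDerivAt_zero
    (strictConcaveOn_effectiveRate hΩ hζ hGL).concaveOn (by simpa using hc) ?_
  simpa [hcrit] using hasDerivAt_effectiveRate (ζ := ζ) (G := G) (L := L) hΩ.le hc

theorem tendsto_marginalRate_nhdsGT_zero (hΩ : 0 < Ω) :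
    Tendsto (marginalRate Ω ζ) (𝓝[>] 0) atTop := by
  have hcoeff : Tendsto (fun c => 1 - 2 * ζ * c) (𝓝[>] 0) (𝓝 1) :=
    tendsto_nhdsWithin_of_tendsto_nhds <|
      Continuous.tendsto' (by fun_prop) 0 1 (by ring)
  have hfrac : Tendsto (fun c => Ω * (1 - ζ * c) / (Ω + c)) (𝓝[>] 0)
      (𝓝 (Ω * (1 - ζ * 0) / (Ω + 0))) :=
    tendsto_nhdsWithin_of_tendsto_nhds <|
      ContinuousAt.tendsto (by fun_prop (disch := linarith))
  exact (hcoeff.pos_mul_atTop one_pos (tendsto_log_one_add_div_nhdsGT_zero hΩ)).atTop_add hfrac.neg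

theorem marginalRate_one_div_two_mul_neg (hΩ : 0 < Ω) (hζ : 0 < ζ) :
    marginalRate Ω ζ (1 / (2 * ζ)) < 0 := by
  have hcoeff : 1 - 2 * ζ * (1 / (2 * ζ)) = 0 := by
    field_simp
    ring
  have htrain : 1 - ζ * (1 / (2 * ζ)) = 1 / 2 := by
    field_simp
    ring
  rw [marginalRate, hcoeff, htrain, zero_mul, zero_sub, neg_lt_zero]
  positivity

theorem exists_marginalRate_eq_zero (hΩ : 0 < Ω) (hζ : 0 < ζ) :
    ∃ c ∈ Ioo 0 (1 / (2 * ζ)), marginalRate Ω ζ c = 0 := by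
  have hb : 0 < 1 / (2 * ζ) := by positivity
  obtain ⟨a, hFa, ha⟩ : ∃ a, 0 < marginalRate Ω ζ a ∧ a ∈ Ioo 0 (1 / (2 * ζ)) :=
    (((tendsto_marginalRate_nhdsGT_zero hΩ).eventually_gt_atTop 0).and
      (Ioo_mem_nhdsGT hb)).exists
  have hcont : ContinuousOn (marginalRate Ω ζ) (Icc a (1 / (2 * ζ))) := fun c hc =>
    (hasDerivAt_marginalRate hΩ.le (ha.1.trans_le hc.1)).continuousAt.continuousWithinAt
  obtain ⟨c, hc, hFc⟩ := intermediate_value_Ioo' ha.2.le hcont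
    ⟨marginalRate_one_div_two_mul_neg hΩ hζ, hFa⟩
  exact ⟨c, ⟨ha.1.trans hc.1, hc.2⟩, hFc⟩

end

theorem stmt_5_general {Ω ζ G L : ℝ} (hΩ : 0 < Ω) (hζ : 0 < ζ) (hGL : 0 < G * L) {s : Set ℝ}
    (hs : Convex ℝ s) (hpos : s ⊆ Ioi 0) (hhalf : Ioo 0 (1 / (2 * ζ)) ⊆ s) :
    StrictConcaveOn ℝ s (effectiveRate Ω ζ G L) ∧
    ∃ c ∈ s, marginalRate Ω ζ c = 0 ∧
      (∀ c' ∈ s, marginalRate Ω ζ c' = 0 → c' = c) ∧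
      IsMaxOn (effectiveRate Ω ζ G L) s c ∧
      ∀ c' ∈ s, IsMaxOn (effectiveRate Ω ζ G L) s c' → c' = c := by
  have hconc := (strictConcaveOn_effectiveRate hΩ hζ.le hGL).subset hpos hs
  obtain ⟨c, hc, hcrit⟩ := exists_marginalRate_eq_zero hΩ hζ
  have hmax :=
    (isMaxOn_effectiveRate_of_marginalRate_eq_zero hΩ hζ.le hGL hc.1 hcrit).on_subset hpos
  refine ⟨hconc, c, hhalf hc, hcrit, fun c' hc' hcrit' => ?_, hmax, fun c' hc' hmax' => ?_⟩
  · exact (strictAntiOn_marginalRate hΩ hζ.le).injOn (hpos hc') hc.1 (hcrit'.trans hcrit.symm)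
  · exact hconc.eq_of_isMaxOn hmax' hmax hc' (hhalf hc)

/-- With `Ω = P_t/(P_t+G)`, the effective MF rate
`𝓡(c) = (1 - ζc)·c·G·L·ln(1 + Ω/c)` is strictly concave on `(0, 1/ζ)`, there is a unique
`c* ∈ (0, 1/ζ)` solving `(1 - 2ζc*)·ln(1 + Ω/c*) - Ω(1 - ζc*)/(Ω + c*) = 0`, and this `c*`
is the unique global maximizer of `𝓡` over `(0, 1/ζ)`. -/
theorem stmt_5 (Pt : ℝ) (hPt : 0 < Pt) (G : ℕ) (hG : 1 ≤ G) (ζ L : ℝ) (hζ : 0 < ζ)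
    (hL : 0 < L) :
    let W : ℝ := Pt / (Pt + G)
    let R : ℝ → ℝ := fun c => (1 - ζ * c) * c * G * L * Real.log (1 + W / c)
    StrictConcaveOn ℝ (Set.Ioo 0 (1 / ζ)) R ∧
    ∃ c : ℝ, c ∈ Set.Ioo 0 (1 / ζ) ∧
      ((1 - 2 * ζ * c) * Real.log (1 + W / c) - W * (1 - ζ * c) / (W + c) = 0) ∧
      (∀ c' ∈ Set.Ioo (0 : ℝ) (1 / ζ),
        (1 - 2 * ζ * c') * Real.log (1 + W / c') - W * (1 - ζ * c') / (W + c') = 0 → c' = c) ∧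
      (∀ c' ∈ Set.Ioo (0 : ℝ) (1 / ζ), R c' ≤ R c) ∧
      (∀ c' ∈ Set.Ioo (0 : ℝ) (1 / ζ), (∀ c'' ∈ Set.Ioo (0 : ℝ) (1 / ζ), R c'' ≤ R c') → c' = c) := by
  have hG' : (0 : ℝ) < G := by exact_mod_cast hG
  exact stmt_5_general (by positivity) hζ (mul_pos hG' hL) (convex_Ioo _ _) Ioo_subset_Ioi_self
    (Ioo_subset_Ioo_right (one_div_le_one_div_of_le hζ (by linarith)))
end

section
/- Let α > 0, let Q, L ≥ 1 be integers with Q ≥ 2, let H ∈ ℂ^{Q×L} have rows h_1,…,h_Q, fix k ∈ {1,…,Q}, and let H_{-k} denote H with its k-th row removed. Define A = h_k^T (α I_L + H_{-k}^H H_{-k})^{-1} h_k^* and B = h_k^T (α I_L + H_{-k}^H H_{-k})^{-1} H_{-k}^H H_{-k} (α I_L + H_{-k}^H H_{-k})^{-1} h_k^*. Then A and B are real and nonnegative, and: (i) h_k^T (α I_L + H^H H)^{-1} h_k^* = A/(1 + A); (ii) Σ_{ϑ≠k, 1≤ϑ≤Q} | h_k^T (α I_L + H^H H)^{-1} h_ϑ^*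 |² = B/(1 + A)². Consequently, for any ρ > 0 and G > 0, the ratio ( (ρ²/G)·|h_k^T (αI_L + H^H H)^{-1} h_k^*|² ) / ( 1 + (ρ²/G)·Σ_{ϑ≠k} |h_k^T (αI_L + H^H H)^{-1} h_ϑ^*|² ) equals (A²·ρ²/G) / ( (1 + A)² + (ρ²/G)·B ). -/
open Matrix

open scoped ComplexOrder

/-!
Splitting off the `k`-th row makes `αI + HᴴH` a rank-one update `M + hₖ* hₖᵀ` of
`M = αI + H₋ₖᴴH₋ₖ`. Multiplying `hₖᵀM⁻¹` by the updated matrix gives `(1 + hₖᵀM⁻¹hₖ*) hₖᵀ`, so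
passing from `M` to the update just divides the row vector `hₖᵀM⁻¹` by `1 + A`. Since `M` is
Hermitian, `B = ‖H₋ₖM⁻¹hₖ*‖²` is the sum of the squared moduli of the cross terms for `M`, and
these acquire the factor `(1 + A)⁻²`.
-/

/-- The matrix `H₋ₖ`: `H` with its `k`-th row removed, the other rows keeping their labels. -/
def dropRow {ι n R : Type*} (H : Matrix ι n R) (k : ι) : Matrix {i // i ≠ k} n R :=
  H.submatrix (fun i => (i : ι)) id

theorem conjTranspose_mul_self_eq_dropRow_add_vecMulVec {ι n R : Type*} [Fintype ι] [DecidableEq ι]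
    [NonUnitalSemiring R] [StarRing R] (H : Matrix ι n R) (k : ι) :
    Hᴴ * H = (dropRow H k)ᴴ * dropRow H k + vecMulVec (star (H k)) (H k) := by
  ext a b
  exact (Fintype.sum_eq_add_sum_subtype_ne _ k).trans (add_comm _ _)

theorem smul_vecMul_inv_add_vecMulVec {n R : Type*} [Fintype n] [DecidableEq n] [CommRing R]
    {M : Matrix n n R} {u v : n → R} (hM : IsUnit M) (hN : IsUnit (M + vecMulVec u v)) :
    (1 + v ⬝ᵥ M⁻¹ *ᵥ u) • (v ᵥ* (M + vecMulVec u v)⁻¹) = v ᵥ* M⁻¹ := by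
  have hsolve : (v ᵥ* M⁻¹) ᵥ* (M + vecMulVec u v) = (1 + v ⬝ᵥ M⁻¹ *ᵥ u) • v := by
    rw [vecMul_add, vecMul_vecMul, nonsing_inv_mul _ ((isUnit_iff_isUnit_det _).1 hM), vecMul_one,
      vecMul_vecMulVec, add_smul, one_smul, ← dotProduct_mulVec]
  rw [← smul_vecMul, ← hsolve, vecMul_vecMul,
    mul_nonsing_inv _ ((isUnit_iff_isUnit_det _).1 hN), vecMul_one]

theorem sinr_eq_of_div_one_add {F : Type*} [Semifield F] (a b c : F) (h : 1 + a ≠ 0) :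
    c * (a / (1 + a)) ^ 2 / (1 + c * (b / (1 + a) ^ 2)) = a ^ 2 * c / ((1 + a) ^ 2 + c * b) := by
  have hsq : (1 + a) ^ 2 ≠ 0 := pow_ne_zero 2 h
  rw [← mul_div_mul_right _ _ hsq]
  congr 1 <;> field_simp

theorem norm_eq_re_of_nonneg {𝕜 : Type*} [RCLike 𝕜] {z : 𝕜} (hz : 0 ≤ z) : ‖z‖ = RCLike.re z := by
  rw [← RCLike.ofReal_re (K := 𝕜) ‖z‖, RCLike.norm_of_nonneg' hz]

section Forms

variable {m n 𝕜 : Type*} [Fintype m] [Fintype n] [DecidableEq n] [RCLike 𝕜]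

/-- The signal term `A = hᵀ M⁻¹ h*` of a channel `h`, with `M` the regularized Gram matrix of the
interfering channels. -/
noncomputable def signalGain (M : Matrix n n 𝕜) (h : n → 𝕜) : 𝕜 :=
  h ⬝ᵥ M⁻¹ *ᵥ star h

/-- The interference term `B = hᵀ M⁻¹ Kᴴ K M⁻¹ h*` of a channel `h`, the rows of `K` being the
interfering channels. -/
noncomputable def interference (M : Matrix n n 𝕜) (K : Matrix m n 𝕜) (h : n → 𝕜) : 𝕜 :=
  h ⬝ᵥ (M⁻¹ * (Kᴴ * K) * M⁻¹) *ᵥ star h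

variable {M : Matrix n n 𝕜}

theorem signalGain_nonneg (hM : M.PosSemidef) (h : n → 𝕜) : 0 ≤ signalGain M h := by
  simpa only [signalGain, star_star] using hM.inv.dotProduct_mulVec_nonneg (star h)

theorem interference_eq_sum_norm_sq (hM : M.IsHermitian) (K : Matrix m n 𝕜) (h : n → 𝕜) :
    interference M K h = ((∑ i, ‖h ⬝ᵥ M⁻¹ *ᵥ star (K i)‖ ^ 2 : ℝ) : 𝕜) := by
  have hcoord (i : m) : (h ᵥ* (M⁻¹ * Kᴴ)) i = h ⬝ᵥ M⁻¹ *ᵥ star (K i) := by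
    rw [← vecMul_vecMul, dotProduct_mulVec]
    rfl
  have hadjoint : (K * M⁻¹) *ᵥ star h = star (h ᵥ* (M⁻¹ * Kᴴ)) := by
    rw [star_vecMul, conjTranspose_mul, conjTranspose_conjTranspose, hM.inv.eq]
  calc interference M K h = h ᵥ* (M⁻¹ * Kᴴ) ⬝ᵥ (K * M⁻¹) *ᵥ star h := by
        rw [interference, ← dotProduct_mulVec, mulVec_mulVec]
        simp only [Matrix.mul_assoc]
    _ = ((∑ i, ‖h ⬝ᵥ M⁻¹ *ᵥ star (K i)‖ ^ 2 : ℝ) : 𝕜) := by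
        simp only [hadjoint, dotProduct, Pi.star_apply, hcoord, RCLike.star_def, RCLike.mul_conj,
          RCLike.ofReal_sum, RCLike.ofReal_pow]

theorem interference_nonneg (hM : M.IsHermitian) (K : Matrix m n 𝕜) (h : n → 𝕜) :
    0 ≤ interference M K h := by
  rw [interference_eq_sum_norm_sq hM, RCLike.ofReal_nonneg]
  positivity

theorem dotProduct_inv_add_vecMulVec_mulVec (hM : M.PosDef) (h x : n → 𝕜) :
    h ⬝ᵥ (M + vecMulVec (star h) h)⁻¹ *ᵥ x = h ⬝ᵥ M⁻¹ *ᵥ x / (1 + signalGain M h) := by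
  have hN : (M + vecMulVec (star h) h).PosDef :=
    hM.add_posSemidef (posSemidef_vecMulVec_star_self h)
  have hne : 1 + signalGain M h ≠ 0 :=
    (add_pos_of_pos_of_nonneg one_pos (signalGain_nonneg hM.posSemidef h)).ne'
  rw [eq_div_iff hne, mul_comm, dotProduct_mulVec, dotProduct_mulVec, ← smul_eq_mul,
    ← smul_dotProduct, signalGain, smul_vecMul_inv_add_vecMulVec hM.isUnit hN.isUnit]

theorem norm_one_add_signalGain (hM : M.PosSemidef) (h : n → 𝕜) :
    ‖1 + signalGain M h‖ = 1 + RCLike.re (signalGain M h) := by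
  rw [norm_eq_re_of_nonneg (add_nonneg zero_le_one (signalGain_nonneg hM h)), map_add,
    RCLike.one_re]

theorem sum_norm_sq_dotProduct_inv_add_vecMulVec_mulVec (hM : M.PosDef) (K : Matrix m n 𝕜)
    (h : n → 𝕜) :
    ∑ i, ‖h ⬝ᵥ (M + vecMulVec (star h) h)⁻¹ *ᵥ star (K i)‖ ^ 2 =
      RCLike.re (interference M K h) / (1 + RCLike.re (signalGain M h)) ^ 2 := by
  simp only [dotProduct_inv_add_vecMulVec_mulVec hM, norm_div,
    norm_one_add_signalGain hM.posSemidef, div_pow, ← Finset.sum_div,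
    interference_eq_sum_norm_sq hM.isHermitian, RCLike.ofReal_re]

end Forms

theorem stmt_9_general {ι n 𝕜 : Type*} [Fintype ι] [DecidableEq ι] [Fintype n] [DecidableEq n]
    [RCLike 𝕜] (P : Matrix n n 𝕜) (H : Matrix ι n 𝕜) (k : ι)
    (hM : (P + (dropRow H k)ᴴ * dropRow H k).PosDef) :
    let M := P + (dropRow H k)ᴴ * dropRow H k
    let Ninv := (P + Hᴴ * H)⁻¹
    let A := signalGain M (H k)
    let B := interference M (dropRow H k) (H k)
    0 ≤ A ∧ 0 ≤ B ∧
    H k ⬝ᵥ Ninv *ᵥ star (H k) = A / (1 + A) ∧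
    ∑ ϑ with ϑ ≠ k, ‖H k ⬝ᵥ Ninv *ᵥ star (H ϑ)‖ ^ 2 =
      RCLike.re B / (1 + RCLike.re A) ^ 2 ∧
    ∀ c : ℝ, c * ‖H k ⬝ᵥ Ninv *ᵥ star (H k)‖ ^ 2 /
        (1 + c * ∑ ϑ with ϑ ≠ k, ‖H k ⬝ᵥ Ninv *ᵥ star (H ϑ)‖ ^ 2) =
      RCLike.re A ^ 2 * c / ((1 + RCLike.re A) ^ 2 + c * RCLike.re B) := by
  intro M Ninv A B
  have hA : 0 ≤ A := signalGain_nonneg hM.posSemidef (H k)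
  have hNinv : Ninv = (M + vecMulVec (star (H k)) (H k))⁻¹ := by
    rw [add_assoc, ← conjTranspose_mul_self_eq_dropRow_add_vecMulVec]
  have hsignal : H k ⬝ᵥ Ninv *ᵥ star (H k) = A / (1 + A) := by
    rw [hNinv]
    exact dotProduct_inv_add_vecMulVec_mulVec hM (H k) (star (H k))
  have hinterference : ∑ ϑ with ϑ ≠ k, ‖H k ⬝ᵥ Ninv *ᵥ star (H ϑ)‖ ^ 2 =
      RCLike.re B / (1 + RCLike.re A) ^ 2 := by
    rw [hNinv, Finset.sum_subtype _ (fun ϑ => Finset.mem_filter_univ ϑ)]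
    exact sum_norm_sq_dotProduct_inv_add_vecMulVec_mulVec hM (dropRow H k) (H k)
  refine ⟨hA, interference_nonneg hM.isHermitian _ _, hsignal, hinterference, fun c => ?_⟩
  have hne : 1 + RCLike.re A ≠ 0 :=
    (add_pos_of_pos_of_nonneg one_pos (RCLike.nonneg_iff.1 hA).1).ne'
  rw [hinterference, hsignal, norm_div, norm_eq_re_of_nonneg hA,
    norm_one_add_signalGain hM.posSemidef, sinr_eq_of_div_one_add _ _ _ hne]

/-- With `A = hₖᵀ(αI + H₋ₖᴴH₋ₖ)⁻¹hₖ*` and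
`B = hₖᵀ(αI + H₋ₖᴴH₋ₖ)⁻¹H₋ₖᴴH₋ₖ(αI + H₋ₖᴴH₋ₖ)⁻¹hₖ*`, both are real and nonnegative,
`hₖᵀ(αI + HᴴH)⁻¹hₖ* = A/(1+A)`, `Σ_{ϑ≠k} |hₖᵀ(αI + HᴴH)⁻¹h_ϑ*|² = B/(1+A)²`, and the
resulting RZF SINR ratio equals `(A²ρ²/G)/((1+A)² + (ρ²/G)B)`. -/
theorem stmt_9 (α : ℝ) (hα : 0 < α) (Q L : ℕ) (hQ : 2 ≤ Q) (hL : 1 ≤ L)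
    (H : Matrix (Fin Q) (Fin L) ℂ) (k : Fin Q) :
    let Hk : Matrix {i : Fin Q // i ≠ k} (Fin L) ℂ :=
      H.submatrix (fun i : {i : Fin Q // i ≠ k} => (i : Fin Q)) id
    let Minv : Matrix (Fin L) (Fin L) ℂ := ((α : ℂ) • 1 + Hkᴴ * Hk)⁻¹
    let Ninv : Matrix (Fin L) (Fin L) ℂ := ((α : ℂ) • 1 + Hᴴ * H)⁻¹
    let A : ℂ := H k ⬝ᵥ Minv.mulVec (star (H k))
    let B : ℂ := H k ⬝ᵥ (Minv * (Hkᴴ * Hk) * Minv).mulVec (star (H k))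
    A.im = 0 ∧ 0 ≤ A.re ∧ B.im = 0 ∧ 0 ≤ B.re ∧
    (H k ⬝ᵥ Ninv.mulVec (star (H k)) = A / (1 + A)) ∧
    ((∑ ϑ ∈ Finset.univ.filter (fun ϑ : Fin Q => ϑ ≠ k),
        ‖H k ⬝ᵥ Ninv.mulVec (star (H ϑ))‖ ^ 2) = B.re / (1 + A.re) ^ 2) ∧
    (∀ ρ G : ℝ, 0 < ρ → 0 < G →
      (ρ ^ 2 / G * ‖H k ⬝ᵥ Ninv.mulVec (star (H k))‖ ^ 2) /
          (1 + ρ ^ 2 / G * ∑ ϑ ∈ Finset.univ.filter (fun ϑ : Fin Q => ϑ ≠ k),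
            ‖H k ⬝ᵥ Ninv.mulVec (star (H ϑ))‖ ^ 2)
        = (A.re ^ 2 * (ρ ^ 2 / G)) / ((1 + A.re) ^ 2 + ρ ^ 2 / G * B.re)) := by
  obtain ⟨hA, hB, hsignal, hinterference, hsinr⟩ := stmt_9_general ((α : ℂ) • 1) H k
    ((PosDef.one.smul (RCLike.ofReal_pos.2 hα)).add_posSemidef
      (posSemidef_conjTranspose_mul_self _))
  rw [RCLike.nonneg_iff] at hA hB
  exact ⟨hA.2, hA.1, hB.2, hB.1, hsignal, hinterference, fun ρ G _ _ => hsinr (ρ ^ 2 / G)⟩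
end

section
/- Let X and Y be real random variables on a probability space with X ≥ 0 almost surely and Y ≥ 1 almost surely, such that X + Y, 1/Y, 1/(X+Y) and ln(1 + X/Y) are all integrable. Then | E[ln(1 + X/Y)] − ln(1 + E[X]/E[Y]) | ≤ ln( E[X+Y]·E[(X+Y)^{-1}] ) + ln( E[Y]·E[Y^{-1}] ). -/
open MeasureTheory

/-!
For `f > 0`, Jensen's inequality for `exp`, applied to `log f` and to `-log f = log f⁻¹`, places the
gap `log (∫ f) - ∫ log f` between `0` and `log (∫ f * ∫ f⁻¹)`. Since `1 + X / Y = (X + Y) / Y`, the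
quantity to be bounded is the difference of two such gaps, those of `Y` and of `X + Y`; both are
nonnegative, so the difference is at most the larger of their upper bounds.
-/

lemma abs_log_le_abs_add_abs_inv (x : ℝ) : |Real.log x| ≤ |x| + |x⁻¹| := by
  have upper : Real.log x ≤ |x| := Real.log_abs x ▸ Real.log_le_self (abs_nonneg x)
  have lower : -|x⁻¹| ≤ Real.log x := by
    simpa only [abs_inv, Real.log_abs] using Real.neg_inv_le_log (abs_nonneg x)
  rw [abs_le]
  constructor <;> linarith [abs_nonneg x, abs_nonneg x⁻¹]

section

variable {Ω : Type*} [MeasurableSpace Ω] {μ : Measure Ω} {f g : Ω → ℝ}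

lemma integrable_log_of_integrable_inv (hf : Integrable f μ)
    (hf_inv : Integrable (fun ω => (f ω)⁻¹) μ) : Integrable (fun ω => Real.log (f ω)) μ :=
  (hf.abs.add hf_inv.abs).mono' hf.aemeasurable.log.aestronglyMeasurable
    (.of_forall fun ω => abs_log_le_abs_add_abs_inv (f ω))

lemma integral_pos_of_ae_pos [NeZero μ] (hf : Integrable f μ) (hpos : ∀ᵐ ω ∂μ, 0 < f ω) :
    0 < ∫ ω, f ω ∂μ := by
  have hnonneg : 0 ≤ᵐ[μ] f := hpos.mono fun _ => le_of_lt
  refine (integral_nonneg_of_ae hnonneg).lt_of_ne' fun integral_eq_zero => ?_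
  have f_eq_zero : f =ᵐ[μ] 0 := (integral_eq_zero_iff_of_nonneg_ae hnonneg hf).mp integral_eq_zero
  obtain ⟨ω, hω_pos, hω_zero⟩ := (hpos.and f_eq_zero).exists
  exact hω_pos.ne' hω_zero

variable [IsProbabilityMeasure μ]

lemma exp_integral_le_integral_exp (hf : Integrable f μ)
    (hf_exp : Integrable (fun ω => Real.exp (f ω)) μ) :
    Real.exp (∫ ω, f ω ∂μ) ≤ ∫ ω, Real.exp (f ω) ∂μ :=
  convexOn_exp.map_integral_le Real.continuous_exp.continuousOn isClosed_univ
    (.of_forall fun _ => Set.mem_univ _) hf hf_exp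

lemma integral_log_le_log_integral (hf : Integrable f μ) (hpos : ∀ᵐ ω ∂μ, 0 < f ω)
    (hf_log : Integrable (fun ω => Real.log (f ω)) μ) :
    ∫ ω, Real.log (f ω) ∂μ ≤ Real.log (∫ ω, f ω ∂μ) := by
  have exp_log_eq : (fun ω => Real.exp (Real.log (f ω))) =ᵐ[μ] f :=
    hpos.mono fun _ => Real.exp_log
  rw [Real.le_log_iff_exp_le (integral_pos_of_ae_pos hf hpos)]
  exact (exp_integral_le_integral_exp hf_log (hf.congr exp_log_eq.symm)).trans_eq
    (integral_congr_ae exp_log_eq)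

lemma log_integral_sub_integral_log_mem_Icc (hf : Integrable f μ) (hpos : ∀ᵐ ω ∂μ, 0 < f ω)
    (hf_inv : Integrable (fun ω => (f ω)⁻¹) μ) :
    Real.log (∫ ω, f ω ∂μ) - ∫ ω, Real.log (f ω) ∂μ ∈
      Set.Icc 0 (Real.log ((∫ ω, f ω ∂μ) * ∫ ω, (f ω)⁻¹ ∂μ)) := by
  have hpos_inv : ∀ᵐ ω ∂μ, 0 < (f ω)⁻¹ := hpos.mono fun _ => inv_pos.mpr
  have jensen : ∫ ω, Real.log (f ω) ∂μ ≤ Real.log (∫ ω, f ω ∂μ) :=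
    integral_log_le_log_integral hf hpos (integrable_log_of_integrable_inv hf hf_inv)
  have log_inv_integrable : Integrable (fun ω => Real.log (f ω)⁻¹) μ :=
    integrable_log_of_integrable_inv hf_inv (by simpa only [inv_inv] using hf)
  have jensen_inv : -∫ ω, Real.log (f ω) ∂μ ≤ Real.log (∫ ω, (f ω)⁻¹ ∂μ) := by
    simpa only [Real.log_inv, integral_neg] using
      integral_log_le_log_integral hf_inv hpos_inv log_inv_integrable
  rw [Real.log_mul (integral_pos_of_ae_pos hf hpos).ne'
    (integral_pos_of_ae_pos hf_inv hpos_inv).ne']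
  constructor <;> linarith

lemma log_integral_mul_integral_inv_nonneg (hf : Integrable f μ) (hpos : ∀ᵐ ω ∂μ, 0 < f ω)
    (hf_inv : Integrable (fun ω => (f ω)⁻¹) μ) :
    0 ≤ Real.log ((∫ ω, f ω ∂μ) * ∫ ω, (f ω)⁻¹ ∂μ) :=
  Set.nonempty_Icc.mp ⟨_, log_integral_sub_integral_log_mem_Icc hf hpos hf_inv⟩

theorem abs_integral_log_div_sub_log_integral_div_integral_le_max
    (hf : Integrable f μ) (hf_pos : ∀ᵐ ω ∂μ, 0 < f ω) (hf_inv : Integrable (fun ω => (f ω)⁻¹) μ)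
    (hg : Integrable g μ) (hg_pos : ∀ᵐ ω ∂μ, 0 < g ω) (hg_inv : Integrable (fun ω => (g ω)⁻¹) μ) :
    |∫ ω, Real.log (f ω / g ω) ∂μ - Real.log ((∫ ω, f ω ∂μ) / ∫ ω, g ω ∂μ)| ≤
      max (Real.log ((∫ ω, f ω ∂μ) * ∫ ω, (f ω)⁻¹ ∂μ))
        (Real.log ((∫ ω, g ω ∂μ) * ∫ ω, (g ω)⁻¹ ∂μ)) := by
  obtain ⟨gap_f_nonneg, gap_f_le⟩ := log_integral_sub_integral_log_mem_Icc hf hf_pos hf_inv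
  obtain ⟨gap_g_nonneg, gap_g_le⟩ := log_integral_sub_integral_log_mem_Icc hg hg_pos hg_inv
  have integral_log_div : ∫ ω, Real.log (f ω / g ω) ∂μ =
      ∫ ω, Real.log (f ω) ∂μ - ∫ ω, Real.log (g ω) ∂μ := by
    rw [← integral_sub (integrable_log_of_integrable_inv hf hf_inv)
      (integrable_log_of_integrable_inv hg hg_inv)]
    refine integral_congr_ae ?_
    filter_upwards [hf_pos, hg_pos] with ω hfω hgω
    exact Real.log_div hfω.ne' hgω.ne'
  rw [integral_log_div, Real.log_div (integral_pos_of_ae_pos hf hf_pos).ne'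
    (integral_pos_of_ae_pos hg hg_pos).ne', abs_sub_comm, sub_sub_sub_comm]
  exact abs_sub_le_of_nonneg_of_le gap_f_nonneg (le_max_of_le_left gap_f_le)
    gap_g_nonneg (le_max_of_le_right gap_g_le)

end

theorem stmt_12_general {Ω : Type*} [MeasurableSpace Ω] (P : Measure Ω) [IsProbabilityMeasure P]
    (X Y : Ω → ℝ) (hX : Integrable X P) (hY : Integrable Y P)
    (hXYpos : ∀ᵐ ω ∂P, 0 < X ω + Y ω) (hYpos : ∀ᵐ ω ∂P, 0 < Y ω)
    (hXYinv : Integrable (fun ω => (X ω + Y ω)⁻¹) P) (hYinv : Integrable (fun ω => (Y ω)⁻¹) P) :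
    |(∫ ω, Real.log (1 + X ω / Y ω) ∂P)
        - Real.log (1 + (∫ ω, X ω ∂P) / (∫ ω, Y ω ∂P))|
      ≤ max (Real.log ((∫ ω, X ω + Y ω ∂P) * (∫ ω, (X ω + Y ω)⁻¹ ∂P)))
        (Real.log ((∫ ω, Y ω ∂P) * (∫ ω, (Y ω)⁻¹ ∂P))) := by
  have integrand_eq : ∫ ω, Real.log (1 + X ω / Y ω) ∂P = ∫ ω, Real.log ((X ω + Y ω) / Y ω) ∂P :=
    integral_congr_ae <| hYpos.mono fun ω hω => by
      simp only [one_add_div hω.ne', add_comm]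
  have means_eq : 1 + (∫ ω, X ω ∂P) / (∫ ω, Y ω ∂P) =
      (∫ ω, X ω + Y ω ∂P) / (∫ ω, Y ω ∂P) := by
    rw [integral_add hX hY, one_add_div (integral_pos_of_ae_pos hY hYpos).ne', add_comm]
  rw [integrand_eq, means_eq]
  exact abs_integral_log_div_sub_log_integral_div_integral_le_max (hX.add hY) hXYpos hXYinv
    hY hYpos hYinv

/-- For real random variables `X ≥ 0` a.s. and `Y ≥ 1` a.s. with
`X+Y`, `1/Y`, `1/(X+Y)` and `ln(1+X/Y)` integrable,
`|E[ln(1+X/Y)] - ln(1+E[X]/E[Y])| ≤ ln(E[X+Y]·E[(X+Y)⁻¹]) + ln(E[Y]·E[Y⁻¹])`. -/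
theorem stmt_12 {Ω : Type*} [MeasurableSpace Ω] (P : Measure Ω) [IsProbabilityMeasure P]
    (X Y : Ω → ℝ) (hX : Measurable X) (hY : Measurable Y)
    (hX0 : ∀ᵐ ω ∂P, 0 ≤ X ω) (hY1 : ∀ᵐ ω ∂P, 1 ≤ Y ω)
    (hXYint : Integrable (fun ω => X ω + Y ω) P)
    (hYinv : Integrable (fun ω => (Y ω)⁻¹) P)
    (hXYinv : Integrable (fun ω => (X ω + Y ω)⁻¹) P)
    (hlog : Integrable (fun ω => Real.log (1 + X ω / Y ω)) P) :
    |(∫ ω, Real.log (1 + X ω / Y ω) ∂P)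
        - Real.log (1 + (∫ ω, X ω ∂P) / (∫ ω, Y ω ∂P))|
      ≤ Real.log ((∫ ω, X ω + Y ω ∂P) * (∫ ω, (X ω + Y ω)⁻¹ ∂P))
        + Real.log ((∫ ω, Y ω ∂P) * (∫ ω, (Y ω)⁻¹ ∂P)) := by
  have hYpos : ∀ᵐ ω ∂P, 0 < Y ω := hY1.mono fun _ => zero_lt_one.trans_le
  have hXYpos : ∀ᵐ ω ∂P, 0 < X ω + Y ω := by
    filter_upwards [hX0, hYpos] with ω using add_pos_of_nonneg_of_pos
  obtain ⟨hXint, hYint⟩ := (integrable_add_iff_of_nonneg hX.aestronglyMeasurable hX0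
    (hYpos.mono fun _ => le_of_lt)).mp hXYint
  exact (stmt_12_general P X Y hXint hYint hXYpos hYpos hXYinv hYinv).trans
    (max_le_add_of_nonneg (log_integral_mul_integral_inv_nonneg hXYint hXYpos hXYinv)
      (log_integral_mul_integral_inv_nonneg hYint hYpos hYinv))
end
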